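/- Let D be a regular domain and let 1 ≤ p < q ≤ m be thresholds such that D is a (p, q)-hybrid* domain. Then a RSCF φ : D^n → Δ(A) is unanimous and strategy-proof if and only if φ is a PFBR and, moreover, a (p, q)-PFBR in the case q − p > 1. -/

import Mathlib

open Finset

noncomputable section

/-- A preference is a linear order over the `m` alternatives, represented as a bijection
from rank positions (0-based: position `0` is the top) to alternatives. -/
abbrev Pref (m : ℕ) := Fin m ≃ Fin m

namespace PFBRPaper

variable {m n : ℕ}

/-- `a` is strictly preferred to `b` under `P`. -/
def Prefers (P : Pref m) (a b : Fin m) : Prop := P.symm a < P.symm b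

/-- The last alternative `a_m` (0-based index `m-1`). -/
def lastAlt (m : ℕ) [NeZero m] : Fin m :=
  ⟨m - 1, Nat.sub_lt (Nat.pos_of_ne_zero (NeZero.ne m)) Nat.one_pos⟩

/-- Every alternative is top-ranked by some preference in the domain. -/
def MinimallyRich [NeZero m] (D : Set (Pref m)) : Prop :=
  ∀ a : Fin m, ∃ P ∈ D, P 0 = a

/-- The preference ranking `a_m` first, ..., `a_1` last. -/
def revPref (m : ℕ) : Pref m :=
  ⟨Fin.rev, Fin.rev, fun i => Fin.rev_rev i, fun i => Fin.rev_rev i⟩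

/-- Diversity, with the labeling convention: the domain contains the preference ranking
`a_1` first, `a_2` second, ..., `a_m` last (the identity), together with its
complete reversal. -/
def Diversity (D : Set (Pref m)) : Prop :=
  Equiv.refl (Fin m) ∈ D ∧ revPref m ∈ D

/-- Two preferences are adjacent: the alternatives at two contiguous rank positions are
swapped and everything else is unchanged. -/
def Adjacent (P P' : Pref m) : Prop :=
  P ≠ P' ∧ ∃ k : ℕ, ∃ hk : k + 1 < m,
    P ⟨k, Nat.lt_of_succ_lt hk⟩ = P' ⟨k + 1, hk⟩ ∧
    P ⟨k + 1, hk⟩ = P' ⟨k, Nat.lt_of_succ_lt hk⟩ ∧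
    ∀ l : Fin m, (l : ℕ) ≠ k → (l : ℕ) ≠ k + 1 → P l = P' l

/-- `π 0, …, π (v-1)` is a path in `D` connecting `P` and `P'`. -/
def IsPath (D : Set (Pref m)) (P P' : Pref m) (π : ℕ → Pref m) (v : ℕ) : Prop :=
  1 ≤ v ∧ (∀ i < v, π i ∈ D) ∧
  (∀ i < v, ∀ j < v, π i = π j → i = j) ∧
  π 0 = P ∧ π (v - 1) = P' ∧
  ∀ i, i + 1 < v → Adjacent (π i) (π (i + 1))

/-- The path `π 0, …, π (v-1)` has no `{a,b}`-restoration: the relative ranking of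
`a` and `b` switches at most once along the path. -/
def NoRestoration (π : ℕ → Pref m) (v : ℕ) (a b : Fin m) : Prop :=
  ∀ i j k : ℕ, i < j → j < k → k < v →
    ¬(Prefers (π i) a b ∧ Prefers (π j) b a ∧ Prefers (π k) a b) ∧
    ¬(Prefers (π i) b a ∧ Prefers (π j) a b ∧ Prefers (π k) b a)

def NoRestorationDomain (D : Set (Pref m)) : Prop :=
  ∀ P ∈ D, ∀ P' ∈ D, P ≠ P' → ∀ a b : Fin m,
    ∃ π v, IsPath D P P' π v ∧ NoRestoration π v a b

def RegularDomain [NeZero m] (D : Set (Pref m)) : Prop :=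
  MinimallyRich D ∧ Diversity D ∧ NoRestorationDomain D

/-- `a ≈ b`: the two alternatives are strongly connected in the domain `D`. -/
def StronglyConnected [NeZero m] (D : Set (Pref m)) (a b : Fin m) : Prop :=
  a ≠ b ∧ ∃ P ∈ D, ∃ P' ∈ D,
    P 0 = a ∧ P 1 = b ∧ P' 0 = b ∧ P' 1 = a ∧
    ∀ k : Fin m, 2 ≤ (k : ℕ) → P k = P' k

/-- `l` is a vertex-path of the graph `G_≈^B(D)`. -/
def IsVertexPathOn [NeZero m] (D : Set (Pref m)) (B : Set (Fin m)) (l : List (Fin m)) : Prop :=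
  l ≠ [] ∧ l.Nodup ∧ (∀ x ∈ l, x ∈ B) ∧ l.Chain' (StronglyConnected D)

/-- `l` is a vertex-path of `G_≈^B(D)` connecting `a` and `b`. -/
def VertexPathBetween [NeZero m] (D : Set (Pref m)) (B : Set (Fin m)) (a b : Fin m)
    (l : List (Fin m)) : Prop :=
  IsVertexPathOn D B l ∧ l.head? = some a ∧ l.getLast? = some b

/-- `a` is a leaf of the subgraph `G_≈^B(D)`. -/
def IsLeaf [NeZero m] (D : Set (Pref m)) (B : Set (Fin m)) (a : Fin m) : Prop :=
  a ∈ B ∧ ∃! b : Fin m, b ∈ B ∧ StronglyConnected D a b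

/-- Single-peakedness w.r.t. the natural order. -/
def SinglePeaked [NeZero m] (P : Pref m) : Prop :=
  ∀ a b : Fin m, ((a < b ∧ b < P 0) ∨ (P 0 < b ∧ b < a)) → Prefers P b a

/-- A `(p,q)`-hybrid preference (thresholds `p < q`, 0-based). -/
def IsHybridPref [NeZero m] (p q : Fin m) (P : Pref m) : Prop :=
  (∀ r s : Fin m, ((r ≤ p ∧ s ≤ p) ∨ (q ≤ r ∧ q ≤ s)) →
      ((r < s ∧ s < P 0) ∨ (P 0 < s ∧ s < r)) → Prefers P s r) ∧
  (P 0 ≤ p → ∀ l : Fin m, p ≤ l → l ≤ q → l ≠ p → Prefers P p l) ∧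
  (q ≤ P 0 → ∀ l : Fin m, p ≤ l → l ≤ q → l ≠ q → Prefers P q l)

/-- The `(p,q)`-hybrid domain of all `(p,q)`-hybrid preferences. -/
def hybridDomain [NeZero m] (p q : Fin m) : Set (Pref m) := {P | IsHybridPref p q P}

/-- `D` is a `(p,q)`-hybrid* domain. -/
def IsHybridStar [NeZero m] (D : Set (Pref m)) (p q : Fin m) : Prop :=
  D ⊆ hybridDomain p q ∧
  (∀ k : Fin m, k ≠ 0 → k ≠ lastAlt m →
      ∃ l, VertexPathBetween D Set.univ 0 (lastAlt m) l ∧ k ∈ l) ∧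
  ((p : ℕ) + 1 < (q : ℕ) → ∀ a : Fin m, ¬ IsLeaf D (Set.Icc p q) a)

/-- A lottery over the alternatives. -/
def Lottery (m : ℕ) : Type :=
  {f : Fin m → ℝ // (∀ a, 0 ≤ f a) ∧ ∑ a, f a = 1}

/-- The probability that a lottery assigns to a set of alternatives. -/
def Lottery.prob (lam : Lottery m) (B : Finset (Fin m)) : ℝ := ∑ a ∈ B, lam.1 a

/-- The support of a lottery. -/
def Lottery.supp (lam : Lottery m) : Finset (Fin m) :=
  Finset.univ.filter (fun a => 0 < lam.1 a)

/-- The degenerate lottery on `a`. -/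
def degLottery (a : Fin m) : Lottery m :=
  ⟨fun b => if b = a then 1 else 0,
   fun b => by by_cases h : b = a <;> simp [h],
   by simp⟩

/-- A profile of preferences drawn from the domain `D`. -/
abbrev Profile (D : Set (Pref m)) (n : ℕ) := Fin n → D

/-- The top-ranked alternative of a preference in the domain. -/
def topOf [NeZero m] {D : Set (Pref m)} (P : D) : Fin m := P.1 0

def Unanimous [NeZero m] {D : Set (Pref m)} (φ : Profile D n → Lottery m) : Prop :=
  ∀ (P : Profile D n) (a : Fin m), (∀ i, topOf (P i) = a) → φ P = degLottery a

/-- The total probability of the `k` top-ranked alternatives of `P` under `lam`. -/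
def topSum (lam : Lottery m) (P : Pref m) (k : ℕ) : ℝ :=
  ∑ t ∈ Finset.univ.filter (fun t : Fin m => (t : ℕ) < k), lam.1 (P t)

/-- Strategy-proofness: truth-telling first-order stochastically dominates any unilateral
misrepresentation. -/
def StrategyProof {D : Set (Pref m)} (φ : Profile D n → Lottery m) : Prop :=
  ∀ (i : Fin n) (P : Profile D n) (Pi' : D) (k : ℕ), k ≤ m →
    topSum (φ (Function.update P i Pi')) (P i).1 k ≤ topSum (φ P) (P i).1 k

def TopsOnly [NeZero m] {D : Set (Pref m)} (φ : Profile D n → Lottery m) : Prop :=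
  ∀ P P' : Profile D n, (∀ i, topOf (P i) = topOf (P' i)) → φ P = φ P'

def Anonymous {D : Set (Pref m)} (φ : Profile D n → Lottery m) : Prop :=
  ∀ (P : Profile D n) (σ : Equiv.Perm (Fin n)), φ (P ∘ σ) = φ P

/-- The interval `[a_k, a_m]`. -/
def upSet (k : Fin m) : Finset (Fin m) := Finset.univ.filter (fun a => k ≤ a)

/-- The interval `[a_1, a_k]`. -/
def downSet (k : Fin m) : Finset (Fin m) := Finset.univ.filter (fun a => a ≤ k)

/-- The interval `[a_p, a_q]`. -/
def midSet (p q : Fin m) : Finset (Fin m) := Finset.univ.filter (fun a => p ≤ a ∧ a ≤ q)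

/-- `S(k,P)`: the voters whose preference top is not to the left of `a_k`. -/
def voterSet [NeZero m] {D : Set (Pref m)} (P : Profile D n) (k : Fin m) : Finset (Fin n) :=
  Finset.univ.filter (fun i => k ≤ topOf (P i))

/-- `β_{S(k,P)}([a_k, a_m])`, with the convention that it is `0` for `k = m`. -/
def tailProb [NeZero m] {D : Set (Pref m)} (β : Finset (Fin n) → Lottery m)
    (P : Profile D n) (k : ℕ) : ℝ :=
  if h : k < m then (β (voterSet P ⟨k, h⟩)).prob (upSet ⟨k, h⟩) else 0

def BallotUnanimity [NeZero m] (β : Finset (Fin n) → Lottery m) : Prop :=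
  β Finset.univ = degLottery (lastAlt m) ∧ β ∅ = degLottery 0

def BallotMonotone (β : Finset (Fin n) → Lottery m) : Prop :=
  ∀ S T : Finset (Fin n), S ⊂ T →
    ∀ k : Fin m, (β S).prob (upSet k) ≤ (β T).prob (upSet k)

/-- `φ` is a probabilistic fixed ballot rule with probabilistic ballots `β`. -/
def IsPFBRWith [NeZero m] {D : Set (Pref m)} (φ : Profile D n → Lottery m)
    (β : Finset (Fin n) → Lottery m) : Prop :=
  BallotUnanimity β ∧ BallotMonotone β ∧
  ∀ (P : Profile D n) (k : Fin m),
    (φ P).1 k = tailProb β P (k : ℕ) - tailProb β P ((k : ℕ) + 1)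

def IsPFBR [NeZero m] {D : Set (Pref m)} (φ : Profile D n → Lottery m) : Prop :=
  ∃ β, IsPFBRWith φ β

/-- The constrained random-dictatorship condition w.r.t. `a_p` and `a_q`. -/
def ConstrainedRD (p q : Fin m) (β : Finset (Fin n) → Lottery m) : Prop :=
  ∃ ε : Fin n → ℝ, (∀ i, 0 ≤ ε i) ∧ ∑ i, ε i = 1 ∧
    ∀ S : Finset (Fin n),
      (β S).prob (upSet q) = ∑ i ∈ S, ε i ∧
      (β S).prob (downSet p) = ∑ i ∈ Sᶜ, ε i

/-- The constrained random-dictatorship condition w.r.t. `a_p` and `a_q` with every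
conditional dictatorial coefficient equal to `1/n`. -/
def ConstrainedRDUniform (p q : Fin m) (β : Finset (Fin n) → Lottery m) : Prop :=
  ∀ S : Finset (Fin n),
    (β S).prob (upSet q) = (S.card : ℝ) / (n : ℝ) ∧
    (β S).prob (downSet p) = ((Sᶜ : Finset (Fin n)).card : ℝ) / (n : ℝ)

/-- Anonymity at the level of probabilistic ballots. -/
def BallotAnonymous (β : Finset (Fin n) → Lottery m) : Prop :=
  ∀ S S' : Finset (Fin n), S.Nonempty → S'.Nonempty → S.card = S'.card → β S = β S'

/-- Per-capita monotonicity w.r.t. `a_p` and `a_q`. -/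
def PerCapitaMonotone (p q : Fin m) (β : Finset (Fin n) → Lottery m) : Prop :=
  ∀ S S' : Finset (Fin n), S.Nonempty → S ⊂ S' → S' ⊂ Finset.univ →
    (∀ t : Fin m, q ≤ t →
      (β S).prob (upSet t) / (S.card : ℝ) ≤ (β S').prob (upSet t) / (S'.card : ℝ)) ∧
    (∀ s : Fin m, s ≤ p →
      (β Sᶜ).prob (downSet s) / (S.card : ℝ) ≤ (β S'ᶜ).prob (downSet s) / (S'.card : ℝ))

/-- Decomposability: `φ` is a mixture of finitely many unanimous and strategy-proof
deterministic social choice functions. -/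
def Decomposable [NeZero m] {D : Set (Pref m)} (φ : Profile D n → Lottery m) : Prop :=
  ∃ (r : ℕ) (f : Fin r → (Profile D n → Fin m)) (α : Fin r → ℝ),
    (∀ k, 0 < α k) ∧ ∑ k, α k = 1 ∧
    (∀ k, Unanimous (fun P => degLottery (f k P)) ∧
          StrategyProof (fun P => degLottery (f k P))) ∧
    ∀ (P : Profile D n) (a : Fin m),
      (φ P).1 a = ∑ k, α k * (if f k P = a then 1 else 0)

/-- `b̂_S^R`: the `≺`-minimum of `supp(β_S) ∩ R` (with the convention `b̂_N^R = a_m`). -/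
def bR [NeZero m] (β : Finset (Fin n) → Lottery m) (q : Fin m) (S : Finset (Fin n)) : Fin m :=
  if h : ((β S).supp ∩ upSet q).Nonempty then ((β S).supp ∩ upSet q).min' h else lastAlt m

/-- `b̂_S^L`: the `≺`-maximum of `supp(β_S) ∩ L` (with the convention `b̂_∅^L = a_1`). -/
def bL [NeZero m] (β : Finset (Fin n) → Lottery m) (p : Fin m) (S : Finset (Fin n)) : Fin m :=
  if h : ((β S).supp ∩ downSet p).Nonempty then ((β S).supp ∩ downSet p).max' h else 0

/-- `α = min over nonempty S ⊂ N of min(β_S(b̂_S^R)/|S|, β_S(b̂_S^L)/(n-|S|))`. -/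
def alphaVal [NeZero m] (β : Finset (Fin n) → Lottery m) (p q : Fin m) : ℝ :=
  sInf {x : ℝ | ∃ S : Finset (Fin n), S.Nonempty ∧ S ≠ Finset.univ ∧
    x = min ((β S).1 (bR β q S) / (S.card : ℝ))
            ((β S).1 (bL β p S) / ((n : ℝ) - (S.card : ℝ)))}

/-- `γ_S = (|S|/n) e_{b̂_S^R} + ((n-|S|)/n) e_{b̂_S^L}`, pointwise. -/
def gammaFun [NeZero m] (β : Finset (Fin n) → Lottery m) (p q : Fin m)
    (S : Finset (Fin n)) (a : Fin m) : ℝ :=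
  ((S.card : ℝ) / (n : ℝ)) * (if a = bR β q S then 1 else 0)
  + (((n : ℝ) - (S.card : ℝ)) / (n : ℝ)) * (if a = bL β p S then 1 else 0)

/-- The max-min formula `f(P) = max_{S ⊆ N} min({r_1(P_j) : j ∈ S} ∪ {b_S})`. -/
def fbrOutcome [NeZero m] {D : Set (Pref m)} (b : Finset (Fin n) → Fin m)
    (P : Profile D n) : Fin m :=
  Finset.univ.sup' Finset.univ_nonempty
    (fun S : Finset (Fin n) =>
      (insert (b S) (S.image (fun j => topOf (P j)))).inf' (Finset.insert_nonempty _ _) id)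

/-- `f` is a `(p,q)`-fixed ballot rule with deterministic ballots `b` and constrained
dictator `i`. -/
def IsFBRWith [NeZero m] {D : Set (Pref m)} (p q : Fin m) (f : Profile D n → Fin m)
    (b : Finset (Fin n) → Fin m) (i : Fin n) : Prop :=
  b Finset.univ = lastAlt m ∧ b ∅ = 0 ∧
  (∀ S T : Finset (Fin n), S ⊂ T → b S ≤ b T) ∧
  (∀ S : Finset (Fin n), (i ∈ S → q ≤ b S) ∧ (i ∉ S → b S ≤ p)) ∧
  ∀ P : Profile D n, f P = fbrOutcome b P

end PFBRPaper

open PFBRPaper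

section Aux
variable {m n : ℕ}

theorem upd_gen {α β : Type*} {n : ℕ} (F : (Fin n → α) → β) (r : α → α → Prop)
    (h : ∀ x i a b, r a b → F (Function.update x i a) = F (Function.update x i b))
    (x y : Fin n → α) (hr : ∀ i, r (x i) (y i)) : F x = F y := by
  classical
  have key : ∀ S : Finset (Fin n), F (fun i => if i ∈ S then y i else x i) = F x := by
    intro S
    induction S using Finset.induction_on with
    | empty => simp
    | insert i S hi ih =>
      rw [← ih]
      have e1 : (fun j => if j ∈ insert i S then y j else x j)
          = Function.update (fun j => if j ∈ S then y j else x j) i (y i) := by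
        funext j
        by_cases hj : j = i
        · subst hj; simp
        · simp [hj]
      have e2 : (fun j => if j ∈ S then y j else x j)
          = Function.update (fun j => if j ∈ S then y j else x j) i (x i) := by
        funext j
        by_cases hj : j = i
        · subst hj; simp [hi]
        · simp [hj]
      rw [e1]
      conv_rhs => rw [e2]
      exact (h _ _ _ _ (hr i)).symm
  have := key univ
  simpa using this.symm

theorem topSum_eq (lam : Lottery m) (P : Pref m) (k : ℕ) :
    topSum lam P k = ∑ z, if (P.symm z : ℕ) < k then lam.1 z else 0 := by
  unfold topSum
  rw [Finset.sum_filter]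
  rw [← Equiv.sum_comp P (fun z => if (P.symm z : ℕ) < k then lam.1 z else 0)]
  simp

theorem topSum_succ (lam : Lottery m) (P : Pref m) (t : Fin m) :
    topSum lam P ((t : ℕ) + 1) = topSum lam P t + lam.1 (P t) := by
  unfold topSum
  have : (Finset.univ.filter (fun s : Fin m => (s : ℕ) < (t : ℕ) + 1))
      = insert t (Finset.univ.filter (fun s : Fin m => (s : ℕ) < (t : ℕ))) := by
    ext s
    simp [Fin.ext_iff]
    omega
  rw [this, Finset.sum_insert (by simp)]
  ring

theorem adj_step {D : Set (Pref m)} {φ : Profile D n → Lottery m} (hsp : StrategyProof φ)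
    (X : Profile D n) (i : Fin n) (A B : D) (k : ℕ) (hk : k + 1 < m)
    (h1 : A.1 ⟨k, Nat.lt_of_succ_lt hk⟩ = B.1 ⟨k + 1, hk⟩)
    (h2 : A.1 ⟨k + 1, hk⟩ = B.1 ⟨k, Nat.lt_of_succ_lt hk⟩)
    (h3 : ∀ l : Fin m, (l : ℕ) ≠ k → (l : ℕ) ≠ k + 1 → A.1 l = B.1 l)
    (z : Fin m) (hz1 : z ≠ A.1 ⟨k, Nat.lt_of_succ_lt hk⟩) (hz2 : z ≠ A.1 ⟨k + 1, hk⟩) :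
    (φ (Function.update X i A)).1 z = (φ (Function.update X i B)).1 z := by
  have s1 : ∀ j ≤ m, topSum (φ (Function.update X i B)) A.1 j
      ≤ topSum (φ (Function.update X i A)) A.1 j := by
    intro j hj
    have := hsp i (Function.update X i A) B j hj
    simpa using this
  have s2 : ∀ j ≤ m, topSum (φ (Function.update X i A)) B.1 j
      ≤ topSum (φ (Function.update X i B)) B.1 j := by
    intro j hj
    have := hsp i (Function.update X i B) A j hj
    simpa using this
  have hset : ∀ (mu : Lottery m) (j : ℕ), j ≠ k + 1 → topSum mu A.1 j = topSum mu B.1 j := by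
    intro mu j hj
    rw [topSum_eq, topSum_eq]
    apply Finset.sum_congr rfl
    intro y _
    have : ((A.1.symm y : ℕ) < j) ↔ ((B.1.symm y : ℕ) < j) := by
      obtain ⟨t, rfl⟩ := A.1.surjective y
      rw [Equiv.symm_apply_apply]
      by_cases ht : (t : ℕ) = k
      · have : t = ⟨k, Nat.lt_of_succ_lt hk⟩ := Fin.ext ht
        rw [this, h1, Equiv.symm_apply_apply]
        simp
        omega
      · by_cases ht' : (t : ℕ) = k + 1
        · have : t = ⟨k + 1, hk⟩ := Fin.ext ht'
          rw [this, h2, Equiv.symm_apply_apply]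
          simp
          omega
        · rw [h3 t ht ht', Equiv.symm_apply_apply]
    simp only [this]
  have heq : ∀ j ≤ m, j ≠ k + 1 → topSum (φ (Function.update X i A)) A.1 j
      = topSum (φ (Function.update X i B)) A.1 j := by
    intro j hj hjk
    apply le_antisymm _ (s1 j hj)
    rw [hset _ j hjk, hset _ j hjk]
    exact s2 j hj
  obtain ⟨t, rfl⟩ := A.1.surjective z
  have ht1 : (t : ℕ) ≠ k := by
    intro h
    exact hz1 (congrArg A.1 (Fin.ext h))
  have ht2 : (t : ℕ) ≠ k + 1 := by
    intro h
    exact hz2 (congrArg A.1 (Fin.ext h))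
  have e1 := heq t t.2.le ht2
  have e2 := heq (t + 1) t.2 (by omega)
  rw [topSum_succ, topSum_succ] at e2
  linarith

/-- Equality off a pair plus equality at one gives equality of lotteries. -/
theorem lot_eq (a b : Lottery m) (y : Fin m) (h : ∀ z, z ≠ y → a.1 z = b.1 z) : a = b := by
  apply Subtype.ext
  funext z
  by_cases hz : z = y
  · subst hz
    have ha := a.2.2
    have hb := b.2.2
    rw [← Finset.add_sum_erase _ _ (Finset.mem_univ z)] at ha hb
    have : ∑ x ∈ univ.erase z, a.1 x = ∑ x ∈ univ.erase z, b.1 x :=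
      Finset.sum_congr rfl (fun x hx => h x (Finset.ne_of_mem_erase hx))
    linarith
  · exact h z hz

theorem pair_eq (a b : Lottery m) (x y : Fin m) (hxy : x ≠ y)
    (h : ∀ z, z ≠ x → z ≠ y → a.1 z = b.1 z) : a.1 x + a.1 y = b.1 x + b.1 y := by
  have ha := a.2.2
  have hb := b.2.2
  have hy : y ∈ univ.erase x := by simp [hxy.symm]
  rw [← Finset.add_sum_erase _ _ (Finset.mem_univ x), ← Finset.add_sum_erase _ _ hy] at ha hb
  have : ∑ z ∈ (univ.erase x).erase y, a.1 z = ∑ z ∈ (univ.erase x).erase y, b.1 z := by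
    apply Finset.sum_congr rfl
    intro z hz
    simp at hz
    exact h z hz.2 hz.1
  linarith

theorem prefers_or (P : Pref m) {a b : Fin m} (h : a ≠ b) : Prefers P a b ∨ Prefers P b a := by
  unfold Prefers
  rcases lt_trichotomy (P.symm a) (P.symm b) with h' | h' | h'
  · exact Or.inl h'
  · exact absurd (P.symm.injective h') h
  · exact Or.inr h'

theorem not_prefers (P : Pref m) {a b : Fin m} (h : Prefers P a b) : ¬ Prefers P b a := by
  unfold Prefers at *
  exact not_lt.mpr h.le

/-- A path on which the relative ranking of `a, b` never changes. -/
theorem const_path {D : Set (Pref m)} (hnr : NoRestorationDomain D) (A B : D) (a b : Fin m)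
    (hab : a ≠ b) (h : Prefers A.1 a b) (h' : Prefers B.1 a b) :
    ∃ (π : ℕ → Pref m) (v : ℕ), IsPath D A.1 B.1 π v ∧ ∀ t < v, Prefers (π t) a b := by
  by_cases hAB : A.1 = B.1
  · refine ⟨fun _ => A.1, 1, ⟨le_rfl, fun _ _ => A.2, fun i hi j hj _ => by omega, rfl, hAB,
      fun i hi => by omega⟩, fun _ _ => h⟩
  · obtain ⟨π, v, hp, hr⟩ := hnr A.1 A.2 B.1 B.2 hAB a b
    refine ⟨π, v, hp, fun t ht => ?_⟩
    obtain ⟨hv, -, -, h0, h1, -⟩ := hp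
    by_contra hc
    have hc' : Prefers (π t) b a := (prefers_or _ hab).resolve_left hc
    have ht0 : t ≠ 0 := by
      rintro rfl
      rw [h0] at hc
      exact hc h
    have ht1 : t ≠ v - 1 := by
      rintro rfl
      rw [h1] at hc
      exact hc h'
    have := (hr 0 t (v - 1) (by omega) (by omega) (by omega)).1
    rw [h0, h1] at this
    exact this ⟨h, hc', h'⟩

/-- Invariant along a path. -/
theorem path_inv {D : Set (Pref m)} {A B : D} {π : ℕ → Pref m} {v : ℕ}
    (hp : IsPath D A.1 B.1 π v) {β : Type*} (F : D → β) (Q : Pref m → Prop)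
    (hQ : ∀ t < v, Q (π t))
    (hF : ∀ A B : D, Adjacent A.1 B.1 → Q A.1 → Q B.1 → F A = F B) : F A = F B := by
  obtain ⟨hv, hD, -, h0, h1, hadj⟩ := hp
  have key : ∀ t, ∀ ht : t < v, F ⟨π t, hD t ht⟩ = F A := by
    intro t
    induction t with
    | zero =>
      intro ht
      congr 1
      exact Subtype.ext h0
    | succ t ih =>
      intro ht
      rw [← ih (by omega)]
      exact (hF _ _ (hadj t ht) (hQ t (by omega)) (hQ _ ht)).symm
  rw [← key (v - 1) (by omega)]
  congr 1
  exact Subtype.ext h1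

theorem adj_same_top [NeZero m] {D : Set (Pref m)} {φ : Profile D n → Lottery m}
    (hnr : NoRestorationDomain D)
    (hu : Unanimous φ) (hsp : StrategyProof φ) (X : Profile D n) (i : Fin n) (A B : D)
    (hadj : Adjacent A.1 B.1) (htop : A.1 0 = B.1 0) :
    φ (Function.update X i A) = φ (Function.update X i B) := by
  classical
  obtain ⟨-, k, hk, h1, h2, h3⟩ := hadj
  set x := A.1 ⟨k, Nat.lt_of_succ_lt hk⟩ with hx
  set y := A.1 ⟨k + 1, hk⟩ with hy
  have hxy : x ≠ y := by
    intro h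
    have := A.1.injective h
    simp at this
  have hA : Prefers A.1 x y := by
    unfold Prefers
    rw [hx, hy, Equiv.symm_apply_apply, Equiv.symm_apply_apply]
    simp [Fin.lt_def]
  have hB : Prefers B.1 y x := by
    unfold Prefers
    rw [h1, h2, Equiv.symm_apply_apply, Equiv.symm_apply_apply]
    simp [Fin.lt_def]
  have hoff : ∀ X : Profile D n, ∀ z, z ≠ x → z ≠ y →
      (φ (Function.update X i A)).1 z = (φ (Function.update X i B)).1 z :=
    fun X z => adj_step hsp X i A B k hk h1 h2 h3 z
  let C : Profile D n → ℝ := fun X =>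
    (φ (Function.update X i A)).1 x - (φ (Function.update X i B)).1 x
  have hCy : ∀ X, C X = (φ (Function.update X i B)).1 y - (φ (Function.update X i A)).1 y := by
    intro X
    have := pair_eq _ _ x y hxy (hoff X)
    simp only [C]
    linarith
  -- local invariance of C
  have hCadj : ∀ (X : Profile D n) (j : Fin n) (E F : D), Adjacent E.1 F.1 →
      (Prefers E.1 x y ↔ Prefers F.1 x y) →
      C (Function.update X j E) = C (Function.update X j F) := by
    intro X j E F hEF hpp
    by_cases hji : j = i
    · subst hji
      simp [C]
    obtain ⟨-, k', hk', e1, e2, e3⟩ := hEF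
    have comm : ∀ G H : D, Function.update (Function.update X j G) i H
        = Function.update (Function.update X i H) j G := fun G H =>
      Function.update_comm hji _ _ _
    have st : ∀ H z, z ≠ E.1 ⟨k', Nat.lt_of_succ_lt hk'⟩ → z ≠ E.1 ⟨k' + 1, hk'⟩ →
      (φ (Function.update (Function.update X j E) i H)).1 z
       = (φ (Function.update (Function.update X j F) i H)).1 z := by
      intro H z hz1 hz2
      rw [comm, comm]
      exact adj_step hsp _ j E F k' hk' e1 e2 e3 z hz1 hz2
    set z := E.1 ⟨k', Nat.lt_of_succ_lt hk'⟩ with hz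
    set w := E.1 ⟨k' + 1, hk'⟩ with hw
    have hE : Prefers E.1 z w := by
      unfold Prefers
      rw [hz, hw, Equiv.symm_apply_apply, Equiv.symm_apply_apply]
      simp [Fin.lt_def]
    have hF : Prefers F.1 w z := by
      unfold Prefers
      rw [e1, e2, Equiv.symm_apply_apply, Equiv.symm_apply_apply]
      simp [Fin.lt_def]
    by_cases hxz : x ≠ z ∧ x ≠ w
    · simp only [C]
      rw [st A x hxz.1 hxz.2, st B x hxz.1 hxz.2]
    · have hyz : y ≠ z ∧ y ≠ w := by
        by_contra hyz
        have hor : (x = z ∧ y = w) ∨ (x = w ∧ y = z) := by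
          by_cases hxz' : x = z
          · left
            refine ⟨hxz', ?_⟩
            by_contra hyw
            apply hyz
            exact ⟨fun h => hxy (hxz'.trans h.symm), hyw⟩
          · right
            have hxw : x = w := by
              by_contra h
              exact hxz ⟨hxz', h⟩
            refine ⟨hxw, ?_⟩
            by_contra hyw
            apply hyz
            exact ⟨hyw, fun h => hxy (hxw.trans h.symm)⟩
        rcases hor with ⟨ha, hb⟩ | ⟨ha, hb⟩
        · rw [ha, hb] at hpp
          exact not_prefers _ hF (hpp.1 hE)
        · rw [ha, hb] at hpp
          exact not_prefers _ hE (hpp.2 hF)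
      rw [hCy, hCy, st A y hyz.1 hyz.2, st B y hyz.1 hyz.2]
  have hCgen : ∀ (X : Profile D n) (j : Fin n) (E F : D),
      (Prefers E.1 x y ↔ Prefers F.1 x y) →
      C (Function.update X j E) = C (Function.update X j F) := by
    intro X j E F hpp
    by_cases hE : Prefers E.1 x y
    · obtain ⟨π, v, hp, hq⟩ := const_path hnr E F x y hxy hE (hpp.1 hE)
      exact path_inv hp (fun E => C (Function.update X j E)) (fun P => Prefers P x y) hq
        (fun E F hEF h1 h2 => hCadj X j E F hEF (iff_of_true h1 h2))
    · have hE' := (prefers_or _ hxy).resolve_left hE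
      have hF' := (prefers_or _ hxy).resolve_left (fun h => hE (hpp.2 h))
      obtain ⟨π, v, hp, hq⟩ := const_path hnr E F y x hxy.symm hE' hF'
      exact path_inv hp (fun E => C (Function.update X j E)) (fun P => Prefers P y x) hq
        (fun E F hEF h1 h2 => hCadj X j E F hEF
          (iff_of_false (not_prefers _ h1) (not_prefers _ h2)))
  have hC0 : C X = 0 := by
    have := upd_gen C (fun E F : D => (Prefers E.1 x y ↔ Prefers F.1 x y)) hCgen X
      (fun j => if Prefers (X j).1 x y then A else B) (by
        intro j
        by_cases h : Prefers (X j).1 x y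
        · simp [h, hA]
        · simp [h, not_prefers _ hB])
    rw [this]
    have u : ∀ H : D, H.1 0 = A.1 0 → φ (Function.update
        (fun j => if Prefers (X j).1 x y then A else B) i H) = degLottery (A.1 0) := by
      intro H hH
      apply hu
      intro j
      by_cases hj : j = i
      · subst hj
        simpa [topOf] using hH
      · simp only [Function.update_of_ne hj, topOf]
        split_ifs
        · rfl
        · exact htop.symm
    simp only [C]
    rw [u A rfl, u B htop.symm]
    simp
  apply lot_eq _ _ y
  intro z hz
  by_cases hzx : z = x
  · rw [hzx]
    simp only [C] at hC0
    linarith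
  · exact hoff X z hzx hz

theorem top_prefers [NeZero m] (P : Pref m) {b : Fin m} (h : b ≠ P 0) : Prefers P (P 0) b := by
  unfold Prefers
  rw [Equiv.symm_apply_apply]
  have : P.symm b ≠ 0 := by
    intro hh
    apply h
    rw [← hh]
    simp
  have h2 : (P.symm b : ℕ) ≠ 0 := fun hh => this (Fin.ext (by simpa using hh))
  rw [Fin.lt_def]
  simp only [Fin.val_zero]
  omega

theorem not_top [NeZero m] (P : Pref m) {a b : Fin m} (h : Prefers P a b) : b ≠ P 0 := by
  rintro rfl
  unfold Prefers at h
  rw [Equiv.symm_apply_apply] at h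
  exact absurd h (by simp)

theorem same_top [NeZero m] {D : Set (Pref m)} {φ : Profile D n → Lottery m}
    (hnr : NoRestorationDomain D)
    (hu : Unanimous φ) (hsp : StrategyProof φ) (X : Profile D n) (i : Fin n) (A B : D)
    (htop : A.1 0 = B.1 0) :
    φ (Function.update X i A) = φ (Function.update X i B) := by
  apply lot_eq _ _ (A.1 0)
  intro b hb
  have hb' : b ≠ B.1 0 := by rwa [← htop]
  obtain ⟨π, v, hp, hq⟩ := const_path hnr A B (A.1 0) b hb.symm (top_prefers _ hb)
    (by rw [htop]; exact top_prefers _ hb')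
  refine path_inv hp (fun E => (φ (Function.update X i E)).1 b) (fun P => Prefers P (A.1 0) b) hq ?_
  intro E F hEF hE hF
  by_cases ht : E.1 0 = F.1 0
  · simp only [adj_same_top hnr hu hsp X i E F hEF ht]
  · obtain ⟨-, k, hk, h1, h2, h3⟩ := hEF
    have hk0 : k = 0 := by
      by_contra hk0
      exact ht (h3 0 (by simp; omega) (by simp))
    subst hk0
    have e0 : (⟨0, Nat.lt_of_succ_lt hk⟩ : Fin m) = 0 := by
      ext; simp
    refine adj_step hsp X i E F 0 hk h1 h2 h3 b ?_ ?_
    · rw [e0]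
      exact not_top _ hE
    · rw [h2, e0]
      exact not_top _ hF

theorem tops_only [NeZero m] {D : Set (Pref m)} {φ : Profile D n → Lottery m}
    (hnr : NoRestorationDomain D)
    (hu : Unanimous φ) (hsp : StrategyProof φ) (X Y : Profile D n)
    (h : ∀ i, topOf (X i) = topOf (Y i)) : φ X = φ Y :=
  upd_gen φ (fun A B : D => A.1 0 = B.1 0)
    (fun X i A B hAB => same_top hnr hu hsp X i A B hAB) X Y h


/-- Edge structure of a hybrid domain. -/
theorem edge_shape [NeZero m] (hm : 3 ≤ m) {D : Set (Pref m)} {p q : Fin m} (hpq : p < q)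
    (hD : D ⊆ hybridDomain p q) {a b : Fin m} (h : StronglyConnected D a b) (hab : a < b) :
    (b : ℕ) = a + 1 ∨ (p ≤ a ∧ b ≤ q) := by
  obtain ⟨-, P, hP, P', hP', e1, e2, e3, e4, -⟩ := h
  have one : ((1 : Fin m) : ℕ) = 1 := by
    rw [Fin.val_one']
    exact Nat.mod_eq_of_lt (by omega)
  have hab' : (a : ℕ) < b := hab
  have hpq' : (p : ℕ) < q := hpq
  have sec : ∀ (Q : Pref m) (c : Fin m), Prefers Q c (Q 1) → c = Q 0 := by
    intro Q c hc
    unfold Prefers at hc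
    rw [Equiv.symm_apply_apply, Fin.lt_def, one] at hc
    have : Q.symm c = 0 := Fin.ext (by rw [Fin.val_zero]; omega)
    rw [← this]
    simp
  have s1 : ∀ c, Prefers P c b → c = a := by
    intro c hc
    rw [← e2] at hc
    rw [sec P c hc, e1]
  have s2 : ∀ c, Prefers P' c a → c = b := by
    intro c hc
    rw [← e4] at hc
    rw [sec P' c hc, e3]
  obtain ⟨i1, i2, i3⟩ := hD hP
  obtain ⟨j1, j2, j3⟩ := hD hP'
  rw [e1] at i1 i2 i3
  rw [e3] at j1 j2 j3
  by_contra hc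
  push Not at hc
  obtain ⟨hc1, hc2⟩ := hc
  by_cases hpa : p ≤ a
  · have hqb := hc2 hpa
    by_cases hqa : q ≤ a
    · have hqa' : (q : ℕ) ≤ a := hqa
      have hb1 : (b : ℕ) - 1 < m := by omega
      have := s2 ⟨b - 1, hb1⟩ (j1 a ⟨b - 1, hb1⟩
        (Or.inr ⟨hqa, by rw [Fin.le_def]; show (q : ℕ) ≤ b - 1; omega⟩)
        (Or.inl ⟨by rw [Fin.lt_def]; show (a : ℕ) < b - 1; omega,
          by rw [Fin.lt_def]; show (b : ℕ) - 1 < b; omega⟩))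
      have h9 : (b : ℕ) - 1 = b := congrArg Fin.val this
      omega
    · push Not at hqa
      have := s2 q (j3 hqb.le a hpa hqa.le (ne_of_lt hqa))
      exact absurd this (ne_of_lt hqb)
  · push Not at hpa
    by_cases hbp : b ≤ p
    · have hbp' : (b : ℕ) ≤ p := hbp
      have hb1 : (a : ℕ) + 1 < m := by omega
      have := s1 ⟨a + 1, hb1⟩ (i1 b ⟨a + 1, hb1⟩
        (Or.inl ⟨hbp, by rw [Fin.le_def]; show (a : ℕ) + 1 ≤ p; omega⟩)
        (Or.inr ⟨by rw [Fin.lt_def]; show (a : ℕ) < a + 1; omega,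
          by rw [Fin.lt_def]; show (a : ℕ) + 1 < b; omega⟩))
      have h9 : (a : ℕ) + 1 = a := congrArg Fin.val this
      omega
    · push Not at hbp
      by_cases hbq : b ≤ q
      · have := s1 p (i2 hpa.le b hbp.le hbq (ne_of_gt hbp))
        exact absurd this (ne_of_gt hpa)
      · push Not at hbq
        have := s1 q (i1 b q (Or.inr ⟨hbq.le, le_rfl⟩) (Or.inr ⟨hpa.trans hpq, hbq⟩))
        exact absurd this (ne_of_gt (hpa.trans hpq))

theorem sc_symm [NeZero m] {D : Set (Pref m)} {a b : Fin m} (h : StronglyConnected D a b) :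
    StronglyConnected D b a := by
  obtain ⟨h0, P, hP, P', hP', e1, e2, e3, e4, e5⟩ := h
  exact ⟨h0.symm, P', hP', P, hP, e3, e4, e1, e2, fun k hk => (e5 k hk).symm⟩

theorem rtg_symm {α : Type*} {R : α → α → Prop} (h : ∀ a b, R a b → R b a) {a b : α}
    (hab : Relation.ReflTransGen R a b) : Relation.ReflTransGen R b a := by
  induction hab with
  | refl => exact Relation.ReflTransGen.refl
  | tail _ hbc ih => exact Relation.ReflTransGen.head (h _ _ hbc) ih

theorem rtg_mono {α : Type*} {R S : α → α → Prop} (h : ∀ a b, R a b → S a b) {a b : α}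
    (hab : Relation.ReflTransGen R a b) : Relation.ReflTransGen S a b := by
  induction hab with
  | refl => exact Relation.ReflTransGen.refl
  | tail _ hbc ih => exact ih.tail (h _ _ hbc)

theorem chain_rtg {α : Type*} (R : α → α → Prop) (Q : α → Prop) (l : List α) :
    ∀ (a b : α), List.IsChain R (a :: l) → (∀ x ∈ a :: l, Q x) →
      (a :: l).getLast? = some b →
      Relation.ReflTransGen (fun x y => R x y ∧ Q x ∧ Q y) a b := by
  induction l with
  | nil =>
    intro a b _ _ h
    simp at h
    rw [h]
  | cons c l ih =>
    intro a b hch hQ hlast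
    rw [List.isChain_cons_cons] at hch
    refine Relation.ReflTransGen.head ⟨hch.1, hQ a (by simp), hQ c (by simp)⟩ ?_
    apply ih c b hch.2 (fun x hx => hQ x (List.mem_cons_of_mem _ hx))
    rw [List.getLast?_cons_cons] at hlast
    exact hlast

/-- From `y`, one can reach an end while avoiding `z`. -/
theorem avoid [NeZero m] {D : Set (Pref m)} {p q : Fin m} (hs : IsHybridStar D p q)
    (y z : Fin m) (hyz : y ≠ z) :
    ∃ e, (e = 0 ∨ e = lastAlt m) ∧
      Relation.ReflTransGen (fun a b => StronglyConnected D a b ∧ a ≠ z ∧ b ≠ z) y e := by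
  by_cases h0 : y = 0
  · exact ⟨y, Or.inl h0, Relation.ReflTransGen.refl⟩
  by_cases hl : y = lastAlt m
  · exact ⟨y, Or.inr hl, Relation.ReflTransGen.refl⟩
  obtain ⟨l, ⟨⟨-, hnd, -, hch⟩, hhead, hlast⟩, hyl⟩ := hs.2.1 y h0 hl
  obtain ⟨l1, l2, rfl⟩ := List.append_of_mem hyl
  have hch : List.IsChain (StronglyConnected D) (l1 ++ y :: l2) := hch
  by_cases hz : z ∈ l2
  · refine ⟨0, Or.inl rfl, ?_⟩
    have hz1 : z ∉ l1 := by
      intro h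
      have := (List.nodup_append.1 hnd).2.2 z h z (List.mem_cons_of_mem _ hz)
      exact this rfl
    have hch' : List.IsChain (StronglyConnected D) (l1 ++ [y]) := by
      have : l1 ++ y :: l2 = (l1 ++ [y]) ++ l2 := by simp
      rw [this, List.isChain_append] at hch
      exact hch.1
    have hh : (l1 ++ [y]).head? = some 0 := by
      cases l1 <;> simpa using hhead
    obtain ⟨l3, hl3⟩ : ∃ l3, l1 ++ [y] = 0 :: l3 := by
      cases h : l1 ++ [y] with
      | nil => simp at h
      | cons a t =>
        rw [h] at hh
        simp at hh
        exact ⟨t, by rw [hh]⟩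
    have := chain_rtg (StronglyConnected D) (fun x => x ≠ z) l3 0 y (hl3 ▸ hch') (by
      intro x hx
      rw [← hl3] at hx
      simp at hx
      rintro rfl
      rcases hx with hx | hx
      · exact hz1 hx
      · exact hyz hx.symm) (by rw [← hl3]; simp)
    refine rtg_symm ?_ this
    intro a b hab
    exact ⟨sc_symm hab.1, hab.2.2, hab.2.1⟩
  · refine ⟨lastAlt m, Or.inr rfl, ?_⟩
    rw [List.isChain_append] at hch
    apply chain_rtg (StronglyConnected D) (fun x => x ≠ z) l2 y _ hch.2.1
    · intro x hx
      simp at hx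
      rintro rfl
      rcases hx with hx | hx
      · exact hyz hx.symm
      · exact hz hx
    · simpa using hlast

theorem reach [NeZero m] (hm : 3 ≤ m) {D : Set (Pref m)} {p q : Fin m}
    (hs : IsHybridStar D p q) (x y : Fin m) :
    Relation.ReflTransGen (StronglyConnected D) x y := by
  have sym : ∀ {a b}, Relation.ReflTransGen (StronglyConnected D) a b →
      Relation.ReflTransGen (StronglyConnected D) b a :=
    rtg_symm (fun a b h => sc_symm h)
  have h0l : Relation.ReflTransGen (StronglyConnected D) 0 (lastAlt m) := by
    obtain ⟨l, ⟨⟨-, hnd, -, hch⟩, hhead, hlast⟩, -⟩ := hs.2.1 ⟨1, by omega⟩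
      (by intro h; have := congrArg Fin.val h; simp at this)
      (by intro h; have := congrArg Fin.val h; simp [lastAlt] at this; omega)
    cases l with
    | nil => simp at hhead
    | cons a l =>
      simp at hhead
      subst hhead
      exact rtg_mono (fun _ _ h => h.1) (chain_rtg (StronglyConnected D) (fun _ => True) l 0 _
        hch (fun _ _ => trivial) hlast)
  have key : ∀ y, Relation.ReflTransGen (StronglyConnected D) 0 y := by
    intro y
    obtain ⟨z, hz⟩ : ∃ z, y ≠ z := by
      by_cases h : y = 0
      · exact ⟨lastAlt m, by
          rw [h]; intro h; have := congrArg Fin.val h; simp [lastAlt] at this; omega⟩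
      · exact ⟨0, h⟩
    obtain ⟨e, he, hr⟩ := avoid hs y z hz
    have hr' := sym (rtg_mono (fun _ _ h => h.1) hr)
    rcases he with rfl | rfl
    · exact hr'
    · exact h0l.trans hr'
  exact (sym (key x)).trans (key y)

/-- The reduced (tops-only) rule. -/
structure Good (E : Fin m → Fin m → Prop) (Φ : (Fin n → Fin m) → Fin m → ℝ) : Prop where
  nonneg : ∀ x z, 0 ≤ Φ x z
  sum1 : ∀ x, ∑ z, Φ x z = 1
  unan : ∀ a z, Φ (fun _ => a) z = if z = a then 1 else 0
  edge : ∀ x i a b, E a b → ∀ z, z ≠ a → z ≠ b →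
    Φ (Function.update x i a) z = Φ (Function.update x i b) z

variable {E : Fin m → Fin m → Prop} {Φ : (Fin n → Fin m) → Fin m → ℝ}

theorem Good.compl (hg : Good E Φ) (U : Finset (Fin m)) (x : Fin n → Fin m) :
    ∑ z ∈ U, Φ x z + ∑ z ∈ Uᶜ, Φ x z = 1 := by
  rw [Finset.sum_add_sum_compl, hg.sum1]

theorem Good.edgeU (hg : Good E Φ) (U : Finset (Fin m)) (x : Fin n → Fin m) (i : Fin n)
    (a b : Fin m) (hE : E a b) (hU : a ∈ U ↔ b ∈ U) :
    ∑ z ∈ U, Φ (Function.update x i a) z = ∑ z ∈ U, Φ (Function.update x i b) z := by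
  by_cases ha : a ∈ U
  · have h1 := hg.compl U (Function.update x i a)
    have h2 := hg.compl U (Function.update x i b)
    have : ∑ z ∈ Uᶜ, Φ (Function.update x i a) z = ∑ z ∈ Uᶜ, Φ (Function.update x i b) z := by
      apply Finset.sum_congr rfl
      intro z hz
      rw [Finset.mem_compl] at hz
      apply hg.edge x i a b hE
      · rintro rfl; exact hz ha
      · rintro rfl; exact hz (hU.1 ha)
    linarith
  · apply Finset.sum_congr rfl
    intro z hz
    apply hg.edge x i a b hE
    · rintro rfl; exact ha hz
    · rintro rfl; exact ha (hU.2 hz)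

theorem rtg_inv {α β : Type*} {R : α → α → Prop} (F : α → β) (h : ∀ a b, R a b → F a = F b)
    {a b : α} (hab : Relation.ReflTransGen R a b) : F a = F b := by
  induction hab with
  | refl => rfl
  | tail _ hbc ih => exact ih.trans (h _ _ hbc)

theorem Good.cut (hg : Good E Φ) (U : Finset (Fin m)) (h b0 : Fin m)
    (hcross : ∀ a b, E a b → a ∈ U → b ∉ U → a = h)
    (hEs : ∀ a b, E a b → E b a)
    (hout : ∀ y, y ∉ U → Relation.ReflTransGen (fun a b => E a b ∧ (a ∈ U ↔ b ∈ U)) y b0)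
    (hreach : ∀ y, Relation.ReflTransGen E h y)
    (x x' : Fin n → Fin m) (hx : ∀ i, x i ∈ U ↔ x' i ∈ U) :
    ∑ z ∈ U, Φ x z = ∑ z ∈ U, Φ x' z := by
  refine upd_gen (fun x => ∑ z ∈ U, Φ x z) (fun a b => a ∈ U ↔ b ∈ U) ?_ x x' hx
  intro x i
  have hO : ∀ y, y ∉ U → ∑ z ∈ U, Φ (Function.update x i y) z
      = ∑ z ∈ U, Φ (Function.update x i b0) z := fun y hy =>
    rtg_inv (fun y => ∑ z ∈ U, Φ (Function.update x i y) z)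
      (fun a b hab => hg.edgeU U x i a b hab.1 hab.2) (hout y hy)
  have hI : ∀ y, y ∈ U → ∑ z ∈ U, Φ (Function.update x i y) z
      = ∑ z ∈ U, Φ (Function.update x i h) z := by
    intro y
    induction hreach y with
    | refl => intro _; rfl
    | @tail b c _ hbc ih =>
      intro hc
      by_cases hb : b ∈ U
      · rw [← ih hb]
        exact (hg.edgeU U x i b c hbc (iff_of_true hb hc)).symm
      · rw [hcross c b (hEs _ _ hbc) hc hb]
  intro a b hab
  by_cases ha : a ∈ U
  · exact (hI a ha).trans (hI b (hab.1 ha)).symm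
  · exact (hO a ha).trans (hO b (fun hb => ha (hab.2 hb))).symm

theorem Good.hub (hg : Good E Φ) (U : Finset (Fin m)) (h u w : Fin m)
    (hh : h ∈ U) (huU : u ∉ U) (hwU : w ∉ U) (huw : u ≠ w) (hu : E u h) (hw : E w h)
    (hdep : ∀ x x' : Fin n → Fin m, (∀ i, x i ∈ U ↔ x' i ∈ U) →
      ∑ z ∈ U, Φ x z = ∑ z ∈ U, Φ x' z) :
    ∃ ε : Fin n → ℝ, (∀ i, 0 ≤ ε i) ∧ ∑ i, ε i = 1 ∧
      ∀ x, ∑ z ∈ U, Φ x z = ∑ i, if x i ∈ U then ε i else 0 := by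
  classical
  have huh : u ≠ h := by rintro rfl; exact huU hh
  have hwh : w ≠ h := by rintro rfl; exact hwU hh
  let f : Finset (Fin n) → ℝ := fun S => ∑ z ∈ U, Φ (fun i => if i ∈ S then h else u) z
  have hf : ∀ (x : Fin n → Fin m) (S : Finset (Fin n)), (∀ i, x i ∈ U ↔ i ∈ S) →
      ∑ z ∈ U, Φ x z = f S := by
    intro x S hx
    apply hdep
    intro i
    rw [hx i]
    by_cases hi : i ∈ S <;> simp [hi, hh, huU]
  -- moves between members of {h,u,w}
  let mem3 : Fin m → Prop := fun a => a = h ∨ a = u ∨ a = w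
  have mv : ∀ (z : Fin m) (x : Fin n → Fin m) (i : Fin n) (a b : Fin m), mem3 a → mem3 b →
      (z ≠ h ∨ True) → (z = u ∨ z = w ∨ (z ≠ h ∧ z ≠ u ∧ z ≠ w)) → (a = z ↔ b = z) →
      Φ (Function.update x i a) z = Φ (Function.update x i b) z := by
    intro z x i a b ha hb _ hz hab
    have base : ∀ a, mem3 a → a ≠ z →
        Φ (Function.update x i a) z = Φ (Function.update x i h) z := by
      intro a ha haz
      have hzh : z ≠ h := by
        rcases hz with rfl | rfl | hz
        · exact huh
        · exact hwh
        · exact hz.1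
      rcases ha with rfl | rfl | rfl
      · rfl
      · exact hg.edge x i _ _ hu z haz.symm hzh
      · exact hg.edge x i _ _ hw z haz.symm hzh
    by_cases haz : a = z
    · rw [haz, hab.1 haz]
    · rw [base a ha haz, base b hb (fun h => haz (hab.2 h))]
  have dep : ∀ (z : Fin m) (x y : Fin n → Fin m), (∀ i, mem3 (x i)) → (∀ i, mem3 (y i)) →
      (z = u ∨ z = w ∨ (z ≠ h ∧ z ≠ u ∧ z ≠ w)) → (∀ i, x i = z ↔ y i = z) → Φ x z = Φ y z := by
    intro z x y hx hy hz hxy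
    exact upd_gen (fun x => Φ x z) (fun a b => mem3 a ∧ mem3 b ∧ (a = z ↔ b = z))
      (fun x i a b hab => mv z x i a b hab.1 hab.2.1 (Or.inr trivial) hz hab.2.2) x y
      (fun i => ⟨hx i, hy i, hxy i⟩)
  have supp : ∀ (x : Fin n → Fin m), (∀ i, mem3 (x i)) → ∀ z, z ≠ h → z ≠ u → z ≠ w →
      Φ x z = 0 := by
    intro x hx z h1 h2 h3
    rw [dep z x (fun _ => h) hx (fun _ => Or.inl rfl) (Or.inr (Or.inr ⟨h1, h2, h3⟩)), hg.unan]
    · simp [h1]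
    · intro i
      apply iff_of_false
      · rcases hx i with h | h | h <;> rw [h] <;> exact Ne.symm ‹_›
      · exact h1.symm
  have sum3 : ∀ (x : Fin n → Fin m), (∀ i, mem3 (x i)) →
      ∑ z ∈ U, Φ x z + Φ x u + Φ x w = 1 := by
    intro x hx
    have h1 := hg.compl U x
    have h2 : ∑ z ∈ Uᶜ, Φ x z = ∑ z ∈ {u, w}, Φ x z := by
      symm
      apply Finset.sum_subset
      · intro z hz
        simp at hz
        rcases hz with rfl | rfl <;> simpa
      · intro z hz hz'
        simp at hz hz'
        exact supp x hx z (by rintro rfl; exact hz hh) hz'.1 hz'.2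
    rw [h2, Finset.sum_pair huw] at h1
    linarith
  have noz : ∀ (z : Fin m) (x : Fin n → Fin m), (∀ i, mem3 (x i)) → (z = u ∨ z = w) →
      (∀ i, x i ≠ z) → Φ x z = 0 := by
    intro z x hx hz hxz
    have hzh : z ≠ h := by rcases hz with rfl | rfl <;> assumption
    rw [dep z x (fun _ => h) hx (fun _ => Or.inl rfl) (by tauto), hg.unan]
    · simp [hzh]
    · intro i
      exact iff_of_false (hxz i) hzh.symm
  -- additivity
  have add : ∀ R T : Finset (Fin n), Disjoint R T →
      f R + (1 - f (R ∪ T)) + (1 - f Tᶜ) = 1 := by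
    intro R T hRT
    have hd := Finset.disjoint_left.1 hRT
    let x : Fin n → Fin m := fun i => if i ∈ R then h else if i ∈ T then w else u
    have hx : ∀ i, mem3 (x i) := by
      intro i
      simp only [x, mem3]
      split_ifs <;> simp
    have e0 : ∑ z ∈ U, Φ x z = f R := by
      apply hf
      intro i
      simp only [x]
      split_ifs <;> simp_all
    let y : Fin n → Fin m := fun i => if i ∈ R ∪ T then h else u
    have hy : ∀ i, mem3 (y i) := by
      intro i
      simp only [y, mem3]
      split_ifs <;> simp
    have e1 : Φ x u = 1 - f (R ∪ T) := by
      rw [dep u x y hx hy (Or.inl rfl) (by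
        intro i
        simp only [x, y, Finset.mem_union]
        by_cases h1 : i ∈ R <;> by_cases h2 : i ∈ T <;> simp [h1, h2, huh.symm, huw.symm])]
      have := sum3 y hy
      rw [noz w y hy (Or.inr rfl) (by
        intro i
        simp only [y]
        split_ifs
        · exact hwh.symm
        · exact huw), hf y (R ∪ T) (by
        intro i
        simp only [y]
        split_ifs <;> simp_all)] at this
      linarith
    let y' : Fin n → Fin m := fun i => if i ∈ T then w else h
    have hy' : ∀ i, mem3 (y' i) := by
      intro i
      simp only [y', mem3]
      split_ifs <;> simp
    have e2 : Φ x w = 1 - f Tᶜ := by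
      rw [dep w x y' hx hy' (Or.inr (Or.inl rfl)) (by
        intro i
        simp only [x, y']
        by_cases h1 : i ∈ R
        · simp [h1, hd h1]
        · by_cases h2 : i ∈ T <;> simp [h1, h2, hwh.symm, huw])]
      have := sum3 y' hy'
      rw [noz u y' hy' (Or.inl rfl) (by
        intro i
        simp only [y']
        split_ifs
        · exact huw.symm
        · exact huh.symm), hf y' Tᶜ (by
        intro i
        simp only [y']
        split_ifs <;> simp_all)] at this
      linarith
    have := sum3 x hx
    rw [e0, e1, e2] at this
    exact this
  have f0 : f ∅ = 0 := by
    simp only [f]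
    apply Finset.sum_eq_zero
    intro z hz
    simp only [Finset.notMem_empty, if_false]
    rw [hg.unan, if_neg]
    rintro rfl
    exact huU hz
  have f1 : f univ = 1 := by
    have := add univ ∅ (by simp)
    simp at this
    linarith
  have fadd : ∀ R T : Finset (Fin n), Disjoint R T → f (R ∪ T) = f R + f T := by
    intro R T hRT
    have h1 := add R T hRT
    have h2 := add ∅ T (by simp)
    simp [f0] at h2
    linarith
  have fsum : ∀ S : Finset (Fin n), f S = ∑ i ∈ S, f {i} := by
    intro S
    induction S using Finset.induction_on with
    | empty => simpa using f0
    | insert i S hi ih =>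
      rw [Finset.sum_insert hi, ← ih, ← fadd _ _ (by simpa using hi)]
      rfl
  refine ⟨fun i => f {i}, fun i => Finset.sum_nonneg (fun z _ => hg.nonneg _ z), ?_, ?_⟩
  · rw [← fsum, f1]
  · intro x
    rw [hf x (univ.filter (fun i => x i ∈ U)) (by simp), fsum, Finset.sum_filter]




theorem le_last [NeZero m] (a : Fin m) : a ≤ lastAlt m := by
  rw [Fin.le_def]
  have := a.2
  show (a : ℕ) ≤ m - 1
  omega

theorem Good.cutE [NeZero m] (hm : 3 ≤ m) {D : Set (Pref m)} {p q : Fin m}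
    (hs : IsHybridStar D p q) (hg : Good (StronglyConnected D) Φ)
    (U : Finset (Fin m)) (h : Fin m) (hh : h ∈ U)
    (hcross : ∀ a b, StronglyConnected D a b → a ∈ U → b ∉ U → a = h)
    (hends : (0 ∈ U ∧ lastAlt m ∉ U) ∨ (lastAlt m ∈ U ∧ 0 ∉ U))
    (x x' : Fin n → Fin m) (hx : ∀ i, x i ∈ U ↔ x' i ∈ U) :
    ∑ z ∈ U, Φ x z = ∑ z ∈ U, Φ x' z := by
  have hmono : ∀ a b, (StronglyConnected D a b ∧ a ≠ h ∧ b ≠ h) →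
      (StronglyConnected D a b ∧ (a ∈ U ↔ b ∈ U)) := by
    rintro a b ⟨hE, ha, hb⟩
    refine ⟨hE, ?_, ?_⟩
    · intro h1
      by_contra h2
      exact ha (hcross a b hE h1 h2)
    · intro h1
      by_contra h2
      exact hb (hcross b a (sc_symm hE) h1 h2)
  obtain ⟨b0, hb0⟩ : ∃ b0, ∀ e, (e = 0 ∨ e = lastAlt m) → e ∉ U → e = b0 := by
    rcases hends with ⟨h1, h2⟩ | ⟨h1, h2⟩
    · refine ⟨lastAlt m, ?_⟩
      rintro e (rfl | rfl) he
      · exact absurd h1 he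
      · rfl
    · refine ⟨0, ?_⟩
      rintro e (rfl | rfl) he
      · rfl
      · exact absurd h1 he
  refine hg.cut U h b0 hcross (fun a b => sc_symm) ?_ (reach hm hs h) x x' hx
  intro y hy
  obtain ⟨e, he, hr⟩ := avoid hs y h (by rintro rfl; exact hy hh)
  have hr' := rtg_mono hmono hr
  have : (y ∈ U) = (e ∈ U) := rtg_inv (fun a => a ∈ U) (fun a b hab => propext hab.2) hr'
  rw [hb0 e he (by rw [← this]; exact hy)] at hr'
  exact hr'

theorem rtg_cross {α : Type*} {R : α → α → Prop} (Q : α → Prop) {a b : α}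
    (hab : Relation.ReflTransGen R a b) (ha : Q a) (hb : ¬ Q b) :
    ∃ c d, R c d ∧ Q c ∧ ¬ Q d := by
  induction hab with
  | refl => exact absurd ha hb
  | @tail b c _ hbc ih =>
    by_cases hq : Q b
    · exact ⟨b, c, hbc, hq, hb⟩
    · exact ih hq

theorem Good.hubE [NeZero m] (hm : 3 ≤ m) {D : Set (Pref m)} {p q : Fin m} (hpq : p < q)
    (hs : IsHybridStar D p q) (hg : Good (StronglyConnected D) Φ)
    (hgap : (p : ℕ) + 1 < q)
    (U : Finset (Fin m)) (h : Fin m) (hh : h ∈ U) (hM : h ∈ Set.Icc p q)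
    (hcross : ∀ a b, StronglyConnected D a b → a ∈ U → b ∉ U → a = h ∧ b ∈ Set.Icc p q)
    (hMU : ∀ a, a ∈ Set.Icc p q → a ∈ U → a = h)
    (hends : (0 ∈ U ∧ lastAlt m ∉ U) ∨ (lastAlt m ∈ U ∧ 0 ∉ U)) :
    ∃ ε : Fin n → ℝ, (∀ i, 0 ≤ ε i) ∧ ∑ i, ε i = 1 ∧
      ∀ x, ∑ z ∈ U, Φ x z = ∑ i, if x i ∈ U then ε i else 0 := by
  obtain ⟨b0, hb0⟩ : ∃ b0, b0 ∉ U := by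
    rcases hends with h1 | h1
    · exact ⟨_, h1.2⟩
    · exact ⟨_, h1.2⟩
  obtain ⟨c, u, hcu, hc, hu⟩ := rtg_cross (fun a => a ∈ U) (reach hm hs h b0) hh hb0
  obtain ⟨rfl, huM⟩ := hcross c u hcu hc hu
  obtain ⟨w, hwM, hcw, hwu⟩ : ∃ w, w ∈ Set.Icc p q ∧ StronglyConnected D c w ∧ w ≠ u := by
    by_contra hno
    push Not at hno
    exact hs.2.2 hgap c ⟨hM, u, ⟨huM, hcu⟩, fun y hy => hno y hy.1 hy.2⟩
  have hw : w ∉ U := fun h => hcw.1 (hMU w hwM h).symm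
  exact hg.hub U c u w hh hu hw hwu.symm (sc_symm hcu) (sc_symm hcw)
    (hg.cutE hm hs U c hh (fun a b h1 h2 h3 => (hcross a b h1 h2 h3).1) hends)

theorem mem_up {k a : Fin m} : a ∈ upSet k ↔ k ≤ a := by simp [upSet]
theorem mem_down {k a : Fin m} : a ∈ downSet k ↔ a ≤ k := by simp [downSet]

theorem crossLow [NeZero m] (hm : 3 ≤ m) {D : Set (Pref m)} {p q : Fin m} (hpq : p < q)
    (hs : IsHybridStar D p q) (h : Fin m) (hh : h ≤ p) (a b : Fin m)
    (hE : StronglyConnected D a b) (ha : a ∈ downSet h) (hb : b ∉ downSet h) :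
    a = h ∧ (h = p → b ∈ Set.Icc p q) := by
  rw [mem_down] at ha hb
  have hab : a < b := lt_of_le_of_lt ha (not_le.1 hb)
  have h1 := edge_shape hm hpq hs.1 hE hab
  simp only [Set.mem_Icc, Fin.ext_iff, Fin.le_def, Fin.lt_def] at *
  omega

theorem crossHigh [NeZero m] (hm : 3 ≤ m) {D : Set (Pref m)} {p q : Fin m} (hpq : p < q)
    (hs : IsHybridStar D p q) (h : Fin m) (hh : q ≤ h) (a b : Fin m)
    (hE : StronglyConnected D a b) (ha : a ∈ upSet h) (hb : b ∉ upSet h) :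
    a = h ∧ (h = q → b ∈ Set.Icc p q) := by
  rw [mem_up] at ha hb
  have hab : b < a := lt_of_lt_of_le (not_le.1 hb) ha
  have h1 := edge_shape hm hpq hs.1 (sc_symm hE) hab
  simp only [Set.mem_Icc, Fin.ext_iff, Fin.le_def, Fin.lt_def] at *
  omega

theorem endsLow [NeZero m] {p q : Fin m} (hpq : p < q) (h : Fin m) (hh : h ≤ p) :
    (0 ∈ downSet h ∧ lastAlt m ∉ downSet h) := by
  rw [mem_down, mem_down]
  exact ⟨Fin.zero_le _, not_le.2 (lt_of_le_of_lt hh (lt_of_lt_of_le hpq (le_last q)))⟩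

theorem endsHigh [NeZero m] {p q : Fin m} (hpq : p < q) (h : Fin m) (hh : q ≤ h) :
    (lastAlt m ∈ upSet h ∧ 0 ∉ upSet h) := by
  rw [mem_up, mem_up]
  exact ⟨le_last _, not_le.2 (lt_of_lt_of_le (lt_of_le_of_lt (Fin.zero_le _) hpq) hh)⟩

theorem Good.rd [NeZero m] (hm : 3 ≤ m) {D : Set (Pref m)} {p q : Fin m} (hpq : p < q)
    (hs : IsHybridStar D p q) (hg : Good (StronglyConnected D) Φ)
    (hgap : (p : ℕ) + 1 < q) :
    ∃ ε : Fin n → ℝ, (∀ i, 0 ≤ ε i) ∧ ∑ i, ε i = 1 ∧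
      (∀ x, ∑ z ∈ downSet p, Φ x z = ∑ i, if x i ≤ p then ε i else 0) ∧
      (∀ x, ∑ z ∈ upSet q, Φ x z = ∑ i, if q ≤ x i then ε i else 0) ∧
      (∀ z, p < z → z < q → ∀ x, Φ x z = ∑ i, if x i = z then ε i else 0) := by
  classical
  obtain ⟨ε, he0, he1, he⟩ := hg.hubE hm hpq hs hgap (downSet p) p (by rw [mem_down])
    ⟨le_rfl, hpq.le⟩ (fun a b h1 h2 h3 => by
      have := crossLow hm hpq hs p le_rfl a b h1 h2 h3
      exact ⟨this.1, this.2 rfl⟩)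
    (fun a ha ha' => by rw [mem_down] at ha'; exact le_antisymm ha' ha.1)
    (Or.inl (endsLow hpq p le_rfl))
  obtain ⟨δ, hd0, hd1, hd⟩ := hg.hubE hm hpq hs hgap (upSet q) q (by rw [mem_up])
    ⟨hpq.le, le_rfl⟩ (fun a b h1 h2 h3 => by
      have := crossHigh hm hpq hs q le_rfl a b h1 h2 h3
      exact ⟨this.1, this.2 rfl⟩)
    (fun a ha ha' => by rw [mem_up] at ha'; exact le_antisymm ha.2 ha')
    (Or.inr (endsHigh hpq q le_rfl))
  simp only [mem_down] at he
  simp only [mem_up] at hd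
  have hL := endsLow hpq p le_rfl
  have hH := endsHigh hpq q le_rfl
  rw [mem_down, mem_down] at hL
  rw [mem_up, mem_up] at hH
  have hdisj : Disjoint (downSet p) (upSet q) := by
    rw [Finset.disjoint_left]
    intro a h1 h2
    rw [mem_down] at h1
    rw [mem_up] at h2
    exact absurd (h2.trans h1) (not_le.2 hpq)
  have hsum : ∀ x, ∑ z ∈ downSet p, Φ x z + ∑ z ∈ upSet q, Φ x z
      + ∑ z ∈ (downSet p ∪ upSet q)ᶜ, Φ x z = 1 := by
    intro x
    rw [← Finset.sum_union hdisj]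
    exact hg.compl _ x
  have hled : ∀ j, ε j ≤ δ j := by
    intro j
    have h1 := hsum (fun i => if i = j then 0 else lastAlt m)
    have h2 : 0 ≤ ∑ z ∈ (downSet p ∪ upSet q)ᶜ, Φ (fun i => if i = j then 0 else lastAlt m) z :=
      Finset.sum_nonneg (fun z _ => hg.nonneg _ z)
    rw [he, hd] at h1
    have h3 : (∑ i, if (if i = j then (0 : Fin m) else lastAlt m) ≤ p then ε i else 0) = ε j := by
      rw [Finset.sum_eq_single j]
      · simp
      · intro b _ hb
        simp [hb, hL.2]
      · simp
    have h4 : (∑ i, if q ≤ (if i = j then (0 : Fin m) else lastAlt m) then δ i else 0)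
        = 1 - δ j := by
      rw [← hd1, eq_sub_iff_add_eq, ← Finset.sum_erase_add _ _ (Finset.mem_univ j),
        ← Finset.sum_erase_add (s := univ) (f := δ) (a := j) (h := Finset.mem_univ j)]
      have : ∑ x ∈ univ.erase j, (if q ≤ (if x = j then (0 : Fin m) else lastAlt m)
          then δ x else 0) = ∑ x ∈ univ.erase j, δ x := by
        apply Finset.sum_congr rfl
        intro b hb
        simp [Finset.ne_of_mem_erase hb, hH.1]
      rw [this]
      simp only [if_true, if_neg hH.2]
      ring
    rw [h3, h4] at h1
    linarith
  have hed : ε = δ := by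
    funext j
    have := (Finset.sum_eq_sum_iff_of_le (fun i (_ : i ∈ univ) => hled i)).1 (he1.trans hd1.symm)
    exact this j (Finset.mem_univ j)
  subst hed
  -- profile with tops only at the ends put nothing in the middle
  have hmid0 : ∀ x : Fin n → Fin m, (∀ i, x i = 0 ∨ x i = lastAlt m) →
      ∀ z, p < z → z < q → Φ x z = 0 := by
    intro x hx z hz1 hz2
    have h1 := hsum x
    rw [he, hd, ← Finset.sum_add_distrib] at h1
    have h2 : ∑ i, ((if x i ≤ p then ε i else 0) + (if q ≤ x i then ε i else 0)) = ∑ i, ε i := by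
      apply Finset.sum_congr rfl
      intro i _
      rcases hx i with h | h <;> rw [h]
      · rw [if_pos hL.1, if_neg hH.2, add_zero]
      · rw [if_neg hL.2, if_pos hH.1, zero_add]
    rw [h2, he1] at h1
    have h3 : ∑ z ∈ (downSet p ∪ upSet q)ᶜ, Φ x z = 0 := by linarith
    rw [Finset.sum_eq_zero_iff_of_nonneg (fun z _ => hg.nonneg _ z)] at h3
    apply h3
    rw [Finset.mem_compl, Finset.mem_union, mem_down, mem_up]
    push Not
    exact ⟨hz1, hz2⟩
  have hred : ∀ z, ∀ x : Fin n → Fin m, ∃ x' : Fin n → Fin m,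
      (∀ i, x i = z → x' i = z) ∧ (∀ i, x i ≠ z → (x' i = 0 ∨ x' i = lastAlt m)) ∧
      Φ x z = Φ x' z := by
    intro z x
    have hc : ∀ i, ∃ e, (x i = z → e = z) ∧ (x i ≠ z → (e = 0 ∨ e = lastAlt m)) ∧
      Relation.ReflTransGen (fun a b => StronglyConnected D a b ∧ a ≠ z ∧ b ≠ z) (x i) e := by
      intro i
      by_cases h : x i = z
      · exact ⟨z, fun _ => rfl, fun h' => absurd h h', by rw [h]⟩
      · obtain ⟨e, he, hr⟩ := avoid hs (x i) z h
        exact ⟨e, fun h' => absurd h' h, fun _ => he, hr⟩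
    choose x' h1 h2 h3 using hc
    refine ⟨x', h1, h2, ?_⟩
    refine upd_gen (fun x => Φ x z) _ ?_ x x' h3
    intro x i a b hab
    exact rtg_inv (fun a => Φ (Function.update x i a) z)
      (fun a b hab => hg.edge x i a b hab.1 z hab.2.1.symm hab.2.2.symm) hab
  have hno : ∀ z, p < z → z < q → ∀ x : Fin n → Fin m, (∀ i, x i ≠ z) → Φ x z = 0 := by
    intro z h1 h2 x hx
    obtain ⟨x', -, hx2, hx3⟩ := hred z x
    rw [hx3]
    exact hmid0 x' (fun i => hx2 i (hx i)) z h1 h2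
  refine ⟨ε, he0, he1, he, hd, ?_⟩
  intro z hz1 hz2 x
  obtain ⟨x', hx1, hx2, hx3⟩ := hred z x
  rw [hx3]
  have hz0 : (0 : Fin m) ≠ z := ne_of_lt (lt_of_le_of_lt (Fin.zero_le _) hz1)
  have hzl : lastAlt m ≠ z := ne_of_gt (lt_of_lt_of_le hz2 (le_last q))
  have h1 := hsum x'
  have h2 : ∑ w ∈ (downSet p ∪ upSet q)ᶜ, Φ x' w = Φ x' z := by
    apply Finset.sum_eq_single z
    · intro w hw hwz
      rw [Finset.mem_compl, Finset.mem_union, mem_down, mem_up] at hw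
      push Not at hw
      obtain ⟨y, hy1, hy2, hy3⟩ := hred w x'
      rw [hy3]
      -- now move voters at z
      apply hno w hw.1 hw.2 y |> fun f => f ?_ 
      intro i hyi
      by_cases h : x' i = w
      · by_cases hxz : x i = z
        · exact hwz (h.symm.trans (hx1 i hxz))
        · rcases hx2 i hxz with h' | h'
          · exact absurd (h.symm.trans h') (ne_of_gt (lt_of_le_of_lt (Fin.zero_le _) hw.1))
          · exact absurd (h.symm.trans h') (ne_of_lt (lt_of_lt_of_le hw.2 (le_last q)))
      · rcases hy2 i h with h' | h'
        · exact absurd (hyi.symm.trans h') (ne_of_gt (lt_of_le_of_lt (Fin.zero_le _) hw.1))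
        · exact absurd (hyi.symm.trans h') (ne_of_lt (lt_of_lt_of_le hw.2 (le_last q)))
    · intro h
      exfalso
      apply h
      rw [Finset.mem_compl, Finset.mem_union, mem_down, mem_up]
      push Not
      exact ⟨hz1, hz2⟩
  rw [h2, he, hd] at h1
  have h3 : (∑ i, if x' i ≤ p then ε i else 0) + (∑ i, if q ≤ x' i then ε i else 0)
      + (∑ i, if x i = z then ε i else 0) = 1 := by
    rw [← he1, ← Finset.sum_add_distrib, ← Finset.sum_add_distrib]
    apply Finset.sum_congr rfl
    intro i _
    by_cases hxz : x i = z
    · rw [hx1 i hxz, if_pos hxz, if_neg (not_le.2 hz1), if_neg (not_le.2 hz2)]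
      ring
    · rw [if_neg hxz]
      rcases hx2 i hxz with h | h <;> rw [h]
      · rw [if_pos hL.1, if_neg hH.2]
        ring
      · rw [if_neg hL.2, if_pos hH.1]
        ring
  linarith

theorem Good.rd_up [NeZero m] {p q : Fin m} {ε : Fin n → ℝ}
    (h2 : ∀ x, ∑ z ∈ upSet q, Φ x z = ∑ i, if q ≤ x i then ε i else 0)
    (h3 : ∀ z, p < z → z < q → ∀ x, Φ x z = ∑ i, if x i = z then ε i else 0)
    (x : Fin n → Fin m) : ∀ (d : ℕ) (k : Fin m), p < k → k ≤ q → (q : ℕ) - k = d →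
      ∑ z ∈ upSet k, Φ x z = ∑ i, if k ≤ x i then ε i else 0 := by
  intro d
  induction d with
  | zero =>
    intro k hk1 hk2 hd
    have : k = q := Fin.ext (by rw [Fin.le_def] at hk2; omega)
    rw [this]
    exact h2 x
  | succ d ih =>
    intro k hk1 hk2 hd
    have hkq : (k : ℕ) + 1 < m := by have := q.2; omega
    let k' : Fin m := ⟨k + 1, hkq⟩
    have hk' : (k' : ℕ) = k + 1 := rfl
    have hlt : ∀ a : Fin m, k ≤ a ↔ (a = k ∨ k' ≤ a) := by
      intro a
      rw [Fin.le_def, Fin.le_def, Fin.ext_iff, hk']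
      omega
    have hn : ¬ k' ≤ k := by
      rw [Fin.le_def, hk']
      omega
    have hup : upSet k = insert k (upSet k') := by
      ext a
      rw [Finset.mem_insert, mem_up, mem_up]
      exact hlt a
    rw [hup, Finset.sum_insert (by rw [mem_up]; exact hn),
      ih k' (by rw [Fin.lt_def] at *; omega) (by rw [Fin.le_def] at *; omega) (by omega),
      h3 k hk1 (by rw [Fin.lt_def]; omega), ← Finset.sum_add_distrib]
    apply Finset.sum_congr rfl
    intro i _
    by_cases h : x i = k
    · simp [h, hn]
    · have := hlt (x i)
      by_cases h' : k' ≤ x i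
      · simp [h, h', this.2 (Or.inr h')]
      · simp [h, h', this]

theorem Good.depUp [NeZero m] (hm : 3 ≤ m) {D : Set (Pref m)} {p q : Fin m} (hpq : p < q)
    (hs : IsHybridStar D p q) (hg : Good (StronglyConnected D) Φ)
    (k : Fin m) (x x' : Fin n → Fin m) (hx : ∀ i, k ≤ x i ↔ k ≤ x' i) :
    ∑ z ∈ upSet k, Φ x z = ∑ z ∈ upSet k, Φ x' z := by
  by_cases hkq : q ≤ k
  · exact hg.cutE hm hs (upSet k) k (by rw [mem_up])
      (fun a b h1 h2 h3 => (crossHigh hm hpq hs k hkq a b h1 h2 h3).1)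
      (Or.inr (endsHigh hpq k hkq)) x x' (by simpa only [mem_up] using hx)
  by_cases hk0 : (k : ℕ) = 0
  · have : upSet k = univ := by
      ext a
      rw [mem_up, Fin.le_def]
      simp [hk0]
    rw [this, hg.sum1, hg.sum1]
  by_cases hkp : (k : ℕ) ≤ p + 1
  · let h : Fin m := ⟨k - 1, by omega⟩
    have hh : h ≤ p := by
      rw [Fin.le_def]
      show (k : ℕ) - 1 ≤ p
      omega
    have hmem : ∀ a, a ∈ downSet h ↔ ¬ k ≤ a := by
      intro a
      rw [mem_down, Fin.le_def, Fin.le_def]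
      show (a : ℕ) ≤ k - 1 ↔ _
      omega
    have hc : upSet k = (downSet h)ᶜ := by
      ext a
      rw [Finset.mem_compl, hmem, mem_up, not_not]
    have key := hg.cutE hm hs (downSet h) h (by rw [mem_down])
      (fun a b h1 h2 h3 => (crossLow hm hpq hs h hh a b h1 h2 h3).1)
      (Or.inl (endsLow hpq h hh)) x x' (by
        intro i
        rw [hmem, hmem, hx i])
    have h1 := hg.compl (downSet h) x
    have h2 := hg.compl (downSet h) x'
    rw [hc]
    linarith
  · obtain ⟨ε, -, -, -, h2, h3⟩ := hg.rd hm hpq hs (by rw [Fin.le_def] at hkq; omega)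
    have hpk : p < k := by rw [Fin.lt_def]; omega
    have hkq' : k ≤ q := (not_le.1 hkq).le
    rw [Good.rd_up h2 h3 x _ k hpk hkq' rfl, Good.rd_up h2 h3 x' _ k hpk hkq' rfl]
    simp only [hx]

theorem forward [NeZero m] (hm : 3 ≤ m)
    (D : Set (Pref m)) (p q : Fin m) (hpq : p < q)
    (hreg : RegularDomain D) (hs : IsHybridStar D p q)
    (φ : Profile D n → Lottery m) (hu : Unanimous φ) (hsp : StrategyProof φ) :
    ∃ β, IsPFBRWith φ β ∧ ((p : ℕ) + 1 < (q : ℕ) → ConstrainedRD p q β) := by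
  classical
  obtain ⟨hrich, ⟨hid, hrev⟩, hnr⟩ := hreg
  have hto := tops_only hnr hu hsp
  choose T hTD hT0 using hrich
  let T' : Fin m → D := fun a => ⟨T a, hTD a⟩
  let Φ : (Fin n → Fin m) → Fin m → ℝ := fun x => (φ (fun i => T' (x i))).1
  have hΦ : ∀ P : Profile D n, (φ P).1 = Φ (fun i => topOf (P i)) := by
    intro P
    simp only [Φ]
    congr 1
    apply hto
    intro i
    exact (hT0 _).symm
  have hg : Good (StronglyConnected D) Φ := by
    refine ⟨fun x z => (φ _).2.1 z, fun x => (φ _).2.2, ?_, ?_⟩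
    · intro a z
      have h := hu (fun _ => T' a) a (fun i => hT0 a)
      show (φ (fun _ => T' a)).1 z = _
      rw [h]
      rfl
    · rintro x i a b ⟨hab, P, hP, P', hP', e1, e2, e3, e4, e5⟩ z hza hzb
      have k1 : 0 + 1 < m := by omega
      have i0 : (⟨0, Nat.lt_of_succ_lt k1⟩ : Fin m) = 0 := Fin.ext (by simp)
      have i1 : (⟨0 + 1, k1⟩ : Fin m) = 1 := Fin.ext (by
        rw [Fin.val_one']
        exact (Nat.mod_eq_of_lt (by omega)).symm)
      have key := adj_step hsp (fun j => T' (x j)) i ⟨P, hP⟩ ⟨P', hP'⟩ 0 k1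
        (by rw [i0, i1]; exact e1.trans e4.symm) (by rw [i0, i1]; exact e2.trans e3.symm)
        (fun l h1 h2 => e5 l (by omega)) z (by rw [i0]; simpa only [e1] using hza)
        (by rw [i1]; simpa only [e2] using hzb)
      rw [hΦ, hΦ] at key
      have hupd : ∀ Q : D, (fun j => topOf (Function.update (fun j => T' (x j)) i Q j))
          = Function.update x i (Q.1 0) := by
        intro Q
        funext j
        by_cases hj : j = i
        · subst hj
          simp [topOf]
        · simp only [Function.update_of_ne hj]
          exact hT0 _
      rw [hupd, hupd] at key
      simpa only [e1, e3] using key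
  let I : D := ⟨Equiv.refl _, hid⟩
  let V : D := ⟨revPref m, hrev⟩
  have hI : topOf I = 0 := rfl
  have hV : topOf V = lastAlt m := by
    apply Fin.ext
    simp [V, topOf, revPref, lastAlt, Fin.rev]
  let β : Finset (Fin n) → Lottery m := fun S => φ (fun i => if i ∈ S then V else I)
  have hβ : ∀ S, (β S).1 = Φ (fun i => if i ∈ S then lastAlt m else 0) := by
    intro S
    simp only [β]
    rw [hΦ]
    congr 1
    funext i
    split_ifs
    · exact hV
    · exact hI
  have hpos : ∀ k : Fin m, (k : ℕ) ≠ 0 → ¬ k ≤ 0 := by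
    intro k hk
    rw [Fin.le_def, Fin.val_zero]
    omega
  have htail : ∀ (P : Profile D n) (k : ℕ) (hk : k < m),
      tailProb β P k = ∑ z ∈ upSet ⟨k, hk⟩, (φ P).1 z := by
    intro P k hk
    simp only [tailProb, hk, dif_pos, Lottery.prob]
    rw [hβ, hΦ P]
    by_cases hk0 : k = 0
    · have : upSet (⟨k, hk⟩ : Fin m) = univ := by
        ext a
        rw [mem_up, Fin.le_def]
        simp [hk0]
      rw [this, hg.sum1, hg.sum1]
    · apply hg.depUp hm hpq hs
      intro i
      by_cases h : (⟨k, hk⟩ : Fin m) ≤ topOf (P i)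
      · simp [voterSet, h, le_last]
      · simp only [voterSet, Finset.mem_filter, Finset.mem_univ, true_and, h, if_false, iff_false]
        exact hpos _ hk0
  refine ⟨β, ⟨⟨?_, ?_⟩, ?_, ?_⟩, ?_⟩
  · simp only [β]
    exact hu _ _ (fun i => by simpa using hV)
  · simp only [β]
    exact hu _ _ (fun i => by simpa using hI)
  · intro S T hST k
    have hmono : Monotone (fun S => (β S).prob (upSet k)) := by
      rw [Finset.monotone_iff_forall_le_insert]
      intro S i hi
      have h1 := hsp i (fun j => if j ∈ S then V else I) V k k.2.le
      have h2 : Function.update (fun j => if j ∈ S then V else I) i V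
          = (fun j => if j ∈ insert i S then V else I) := by
        funext j
        by_cases hj : j = i
        · subst hj; simp
        · simp [hj]
      rw [h2] at h1
      simp only [hi, if_false] at h1
      have h3 : ∀ lam : Lottery m, topSum lam (Equiv.refl (Fin m)) k = 1 - lam.prob (upSet k) := by
        intro lam
        rw [eq_sub_iff_add_eq, ← lam.2.2, topSum, Lottery.prob, upSet]
        rw [← Finset.sum_filter_add_sum_filter_not univ (fun a : Fin m => (a : ℕ) < k)]
        congr 1
        apply Finset.sum_congr _ (fun _ _ => rfl)
        ext a
        simp
      have h4 : topSum (β (insert i S)) (Equiv.refl (Fin m)) k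
        ≤ topSum (β S) (Equiv.refl (Fin m)) k := h1
      rw [h3, h3] at h4
      show (β S).prob (upSet k) ≤ (β (insert i S)).prob (upSet k)
      linarith
    exact hmono hST.subset
  · intro P k
    rw [htail P k k.2]
    by_cases hk : (k : ℕ) + 1 < m
    · rw [htail P _ hk]
      have hup : upSet k = insert k (upSet ⟨k + 1, hk⟩) := by
        ext a
        rw [Finset.mem_insert, mem_up, mem_up, Fin.ext_iff, Fin.le_def, Fin.le_def]
        show _ ↔ _ ∨ (k : ℕ) + 1 ≤ a
        omega
      rw [show (⟨(k : ℕ), k.2⟩ : Fin m) = k from rfl, hup, Finset.sum_insert]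
      · ring
      · rw [mem_up, Fin.le_def]
        show ¬ ((k : ℕ) + 1 ≤ k)
        omega
    · have : tailProb β P ((k : ℕ) + 1) = 0 := by
        simp [tailProb, hk]
      rw [this]
      have hup : upSet (⟨(k : ℕ), k.2⟩ : Fin m) = {k} := by
        ext a
        rw [Finset.mem_singleton, mem_up, Fin.ext_iff, Fin.le_def]
        have := a.2
        show (k : ℕ) ≤ a ↔ _
        omega
      rw [hup, Finset.sum_singleton, sub_zero]
  · intro hgap
    obtain ⟨ε, he0, he1, h1, h2, -⟩ := hg.rd hm hpq hs hgap
    refine ⟨ε, he0, he1, fun S => ⟨?_, ?_⟩⟩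
    · rw [Lottery.prob, hβ, h2, ← Finset.sum_filter]
      apply Finset.sum_congr _ (fun _ _ => rfl)
      ext i
      have := endsHigh hpq q le_rfl
      rw [mem_up, mem_up] at this
      by_cases hi : i ∈ S <;> simp [hi, this.1]
      exact fun h => this.2 h.le
    · rw [Lottery.prob, hβ, h1, ← Finset.sum_filter]
      apply Finset.sum_congr _ (fun _ _ => rfl)
      ext i
      have := endsLow hpq p le_rfl
      rw [mem_down, mem_down] at this
      by_cases hi : i ∈ S <;> simp [hi, this.2, this.1]


theorem abel_sum (w d : ℕ → ℝ) (M : ℕ) :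
    ∑ k ∈ Finset.range (M + 1), w k * (d k - d (k + 1))
      = w 0 * d 0 + ∑ k ∈ Finset.range M, d (k + 1) * (w (k + 1) - w k) - w M * d (M + 1) := by
  induction M with
  | zero => simp; ring
  | succ M ih =>
    rw [Finset.sum_range_succ, ih, Finset.sum_range_succ (fun k => d (k + 1) * (w (k + 1) - w k))]
    ring

theorem core_sum (M lo hi : ℕ) (d w : ℕ → ℝ) (c : ℝ) (hlh : lo ≤ hi) (hiM : hi ≤ M)
    (hmid : ∀ k, lo ≤ k → k < hi → d (k + 1) = c) (hc : c * (w hi - w lo) ≤ 0)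
    (hout : ∀ k < M, ¬ (lo ≤ k ∧ k < hi) → d (k + 1) * (w (k + 1) - w k) ≤ 0) :
    ∑ k ∈ Finset.range M, d (k + 1) * (w (k + 1) - w k) ≤ 0 := by
  rw [← Finset.sum_filter_add_sum_filter_not (Finset.range M) (fun k => lo ≤ k ∧ k < hi)]
  have h1 : ∑ k ∈ (Finset.range M).filter (fun k => lo ≤ k ∧ k < hi),
      d (k + 1) * (w (k + 1) - w k) = c * (w hi - w lo) := by
    have : (Finset.range M).filter (fun k => lo ≤ k ∧ k < hi) = Finset.Ico lo hi := by
      ext k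
      simp
      omega
    rw [this, ← Finset.sum_Ico_sub w hlh, Finset.mul_sum]
    apply Finset.sum_congr rfl
    intro k hk
    rw [Finset.mem_Ico] at hk
    rw [hmid k hk.1 hk.2]
  have h2 : ∑ k ∈ (Finset.range M).filter (fun k => ¬ (lo ≤ k ∧ k < hi)),
      d (k + 1) * (w (k + 1) - w k) ≤ 0 := by
    apply Finset.sum_nonpos
    intro k hk
    rw [Finset.mem_filter, Finset.mem_range] at hk
    exact hout k hk.1 hk.2
  linarith

theorem tail_diff [NeZero m] {D : Set (Pref m)} {p q : Fin m} {β : Finset (Fin n) → Lottery m}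
    (hmono : BallotMonotone β)
    (hmid : (q : ℕ) = p + 1 ∨ ∃ ε : Fin n → ℝ, (∀ i, 0 ≤ ε i) ∧
      ∀ S k, p < k → k ≤ q → (β S).prob (upSet k) = ∑ i ∈ S, ε i)
    (P Q : Profile D n) (i : Fin n) (hPQ : ∀ j, j ≠ i → P j = Q j)
    (hxy : topOf (P i) ≤ topOf (Q i)) :
    ∃ c, 0 ≤ c ∧ ∀ k : ℕ, 0 ≤ tailProb β Q k - tailProb β P k ∧
      (¬ ((topOf (P i) : ℕ) < k ∧ k ≤ topOf (Q i)) → tailProb β Q k - tailProb β P k = 0) ∧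
      ((p : ℕ) < k → k ≤ q → (topOf (P i) : ℕ) < k → k ≤ topOf (Q i) →
        tailProb β Q k - tailProb β P k = c) := by
  classical
  have hsub : ∀ k : Fin m, voterSet P k ⊆ voterSet Q k := by
    intro k j hj
    simp only [voterSet, Finset.mem_filter, Finset.mem_univ, true_and] at *
    by_cases h : j = i
    · subst h
      exact hj.trans hxy
    · rw [← hPQ j h]
      exact hj
  have hnn : ∀ k : ℕ, 0 ≤ tailProb β Q k - tailProb β P k := by
    intro k
    unfold tailProb
    split_ifs with h
    · rcases (hsub ⟨k, h⟩).eq_or_ssubset with h' | h'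
      · rw [h', sub_self]
      · exact sub_nonneg.2 (hmono _ _ h' _)
    · simp
  have hz : ∀ k : ℕ, (¬ ((topOf (P i) : ℕ) < k ∧ k ≤ topOf (Q i)) →
      tailProb β Q k - tailProb β P k = 0) := by
    intro k hk
    unfold tailProb
    split_ifs with h
    · have : voterSet P ⟨k, h⟩ = voterSet Q ⟨k, h⟩ := by
        ext j
        simp only [voterSet, Finset.mem_filter, Finset.mem_univ, true_and]
        by_cases hj : j = i
        · subst hj
          rw [Fin.le_def, Fin.le_def]
          rw [Fin.le_def] at hxy
          show k ≤ _ ↔ k ≤ _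
          omega
        · rw [hPQ j hj]
      rw [this, sub_self]
    · simp
  rcases hmid with hq | ⟨ε, he0, he⟩
  · refine ⟨tailProb β Q q - tailProb β P q, hnn _, fun k => ⟨hnn k, hz k, ?_⟩⟩
    intro h1 h2 _ _
    have : k = q := by omega
    rw [this]
  · refine ⟨ε i, he0 i, fun k => ⟨hnn k, hz k, ?_⟩⟩
    intro h1 h2 h3 h4
    have hk : k < m := lt_of_le_of_lt h2 q.2
    have hins : voterSet Q ⟨k, hk⟩ = insert i (voterSet P ⟨k, hk⟩) := by
      ext j
      simp only [voterSet, Finset.mem_filter, Finset.mem_univ, true_and, Finset.mem_insert]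
      by_cases hj : j = i
      · subst hj
        simp only [true_or, iff_true]
        exact h4
      · rw [hPQ j hj]
        simp [hj]
    have hni : i ∉ voterSet P ⟨k, hk⟩ := by
      simp only [voterSet, Finset.mem_filter, Finset.mem_univ, true_and, Fin.le_def]
      omega
    unfold tailProb
    rw [dif_pos hk, dif_pos hk, he _ _ h1 h2, he _ _ h1 h2, hins, Finset.sum_insert hni]
    ring

theorem tail_zero [NeZero m] {D : Set (Pref m)} (β : Finset (Fin n) → Lottery m)
    (P : Profile D n) : tailProb β P 0 = 1 := by
  unfold tailProb
  rw [dif_pos (Nat.pos_of_ne_zero (NeZero.ne m)), Lottery.prob]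
  refine Eq.trans ?_ (β (voterSet P ⟨0, Nat.pos_of_ne_zero (NeZero.ne m)⟩)).2.2
  apply Finset.sum_congr _ (fun _ _ => rfl)
  ext a
  simp [upSet, Fin.le_def]

theorem tail_end [NeZero m] {D : Set (Pref m)} (β : Finset (Fin n) → Lottery m)
    (P : Profile D n) : tailProb β P m = 0 := by
  unfold tailProb
  simp

theorem backward_sp [NeZero m] {D : Set (Pref m)} {p q : Fin m} (hpq : p < q)
    (hD : D ⊆ hybridDomain p q) (φ : Profile D n → Lottery m)
    {β : Finset (Fin n) → Lottery m} (hβ : IsPFBRWith φ β)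
    (hmid : (q : ℕ) = p + 1 ∨ ∃ ε : Fin n → ℝ, (∀ i, 0 ≤ ε i) ∧
      ∀ S k, p < k → k ≤ q → (β S).prob (upSet k) = ∑ i ∈ S, ε i) : StrategyProof φ := by
  classical
  obtain ⟨-, hmono, hφ⟩ := hβ
  intro i P Pi' K hK
  set P' := Function.update P i Pi' with hP'
  obtain ⟨M, hM⟩ : ∃ M, m = M + 1 := ⟨m - 1, by have := NeZero.ne m; omega⟩
  let w : ℕ → ℝ := fun k => if h : k < m then
    (if ((P i).1.symm ⟨k, h⟩ : ℕ) < K then 1 else 0) else 0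
  let d : ℕ → ℝ := fun k => tailProb β P' k - tailProb β P k
  have htop : ∀ Q : Profile D n, topSum (φ Q) (P i).1 K
      = ∑ k ∈ Finset.range m, w k * (tailProb β Q k - tailProb β Q (k + 1)) := by
    intro Q
    rw [topSum_eq, Finset.sum_range]
    apply Finset.sum_congr rfl
    intro z _
    rw [hφ Q z]
    simp [w]
  have hdiff : topSum (φ P') (P i).1 K - topSum (φ P) (P i).1 K
      = ∑ k ∈ Finset.range M, d (k + 1) * (w (k + 1) - w k) := by
    rw [htop, htop, ← Finset.sum_sub_distrib]
    have h1 : ∀ k ∈ Finset.range m, w k * (tailProb β P' k - tailProb β P' (k + 1))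
        - w k * (tailProb β P k - tailProb β P (k + 1)) = w k * (d k - d (k + 1)) := by
      intro k _
      simp only [d]
      ring
    rw [Finset.sum_congr rfl h1]
    have h2 : ∑ k ∈ Finset.range m, w k * (d k - d (k + 1))
        = ∑ k ∈ Finset.range (M + 1), w k * (d k - d (k + 1)) := by rw [← hM]
    rw [h2, abel_sum]
    have h0 : d 0 = 0 := by simp only [d]; rw [tail_zero, tail_zero, sub_self]
    have h3 : d (M + 1) = 0 := by simp only [d]; rw [← hM, tail_end, tail_end, sub_self]
    rw [h0, h3]
    ring
  suffices hle : ∑ k ∈ Finset.range M, d (k + 1) * (w (k + 1) - w k) ≤ 0 by linarith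
  have hw : ∀ a b : Fin m, Prefers (P i).1 a b → w b ≤ w a := by
    intro a b hab
    unfold Prefers at hab
    rw [Fin.lt_def] at hab
    simp only [w, Fin.is_lt, dif_pos, Fin.eta]
    split_ifs <;> first | omega | norm_num
  obtain ⟨i1, i2, i3⟩ := hD (P i).2
  set x : Fin m := topOf (P i) with hx
  have hx0 : (P i).1 0 = x := rfl
  rw [hx0] at i1 i2 i3
  have hwtop : ∀ b : Fin m, w b ≤ w x := by
    intro b
    by_cases hb : b = x
    · rw [hb]
    · exact hw x b (top_prefers (P i).1 hb)
  have F1 : ∀ k : ℕ, k + 1 < m → (x : ℕ) ≤ k → (k + 1 ≤ p ∨ (q : ℕ) ≤ k) → w (k + 1) ≤ w k := by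
    intro k hk hxk hpq'
    have hk' : k < m := by omega
    by_cases h : (x : ℕ) = k
    · have := hwtop ⟨k + 1, hk⟩
      rwa [h] at this
    · apply hw ⟨k, hk'⟩ ⟨k + 1, hk⟩
      apply i1
      · simp only [Fin.le_def]
        omega
      · right
        simp only [Fin.lt_def]
        omega
  have F2 : ∀ k : ℕ, k + 1 < m → k + 1 ≤ (x : ℕ) → (k + 1 ≤ p ∨ (q : ℕ) ≤ k) →
      w k ≤ w (k + 1) := by
    intro k hk hxk hpq'
    have hk' : k < m := by omega
    by_cases h : (x : ℕ) = k + 1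
    · have := hwtop ⟨k, hk'⟩
      rwa [h] at this
    · apply hw ⟨k + 1, hk⟩ ⟨k, hk'⟩
      apply i1
      · simp only [Fin.le_def]
        omega
      · left
        simp only [Fin.lt_def]
        omega
  have hpq' : (p : ℕ) < q := hpq
  set y : Fin m := topOf Pi' with hy
  have hP'i : topOf (P' i) = y := by simp [hP', hy]
  have hoff : ∀ j, j ≠ i → P j = P' j := by
    intro j hj
    simp [hP', hj]
  have hq2 := q.2
  have hy2 := y.2
  have hx2 := x.2
  rcases le_total x y with hxy | hxy
  · have hxy' : (x : ℕ) ≤ y := hxy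
    obtain ⟨c, hc0, hc⟩ := tail_diff hmono hmid P P' i hoff (by rw [hP'i]; exact hxy)
    rw [hP'i, ← hx] at hc
    have hout : ∀ k < M, ¬ ((p : ℕ) ≤ k ∧ k < q ∧ (x : ℕ) ≤ k ∧ k < y) →
        d (k + 1) * (w (k + 1) - w k) ≤ 0 := by
      intro k hk hk2
      obtain ⟨a1, a2, -⟩ := hc (k + 1)
      by_cases h : (x : ℕ) < k + 1 ∧ k + 1 ≤ y
      · exact mul_nonpos_of_nonneg_of_nonpos a1
          (sub_nonpos.2 (F1 k (by omega) (by omega) (by omega)))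
      · have : d (k + 1) = 0 := a2 h
        rw [this, zero_mul]
    by_cases hlh : max (x : ℕ) p < min (y : ℕ) q
    · refine core_sum M (max (x : ℕ) p) (min (y : ℕ) q) d w c hlh.le (by omega) ?_ ?_ ?_
      · intro k h1 h2
        exact (hc (k + 1)).2.2 (by omega) (by omega) (by omega) (by omega)
      · apply mul_nonpos_of_nonneg_of_nonpos hc0
        apply sub_nonpos.2
        have hhi : min (y : ℕ) q < m := by omega
        by_cases hxp : (p : ℕ) ≤ x
        · rw [max_eq_left hxp]
          exact hwtop ⟨min (y : ℕ) q, hhi⟩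
        · rw [max_eq_right (by omega)]
          apply hw p ⟨min (y : ℕ) q, hhi⟩
          apply i2
          · rw [Fin.le_def]; omega
          · rw [Fin.le_def]; show (p : ℕ) ≤ min (y : ℕ) q; omega
          · rw [Fin.le_def]; show min (y : ℕ) q ≤ q; omega
          · rw [Ne, Fin.ext_iff]; show ¬ min (y : ℕ) q = p; omega
      · intro k hk hk2
        exact hout k hk (by omega)
    · refine core_sum M 0 0 d w 0 le_rfl (by omega) (by intro k _ h; omega) (by simp) ?_
      intro k hk _
      exact hout k hk (by omega)
  · have hxy' : (y : ℕ) ≤ x := hxy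
    obtain ⟨c, hc0, hc⟩ := tail_diff hmono hmid P' P i (fun j hj => (hoff j hj).symm)
      (by rw [hP'i]; exact hxy)
    rw [hP'i, ← hx] at hc
    have hout : ∀ k < M, ¬ ((p : ℕ) ≤ k ∧ k < q ∧ (y : ℕ) ≤ k ∧ k < x) →
        d (k + 1) * (w (k + 1) - w k) ≤ 0 := by
      intro k hk hk2
      obtain ⟨a1, a2, -⟩ := hc (k + 1)
      by_cases h : (y : ℕ) < k + 1 ∧ k + 1 ≤ x
      · have : d (k + 1) ≤ 0 := by simp only [d]; linarith
        exact mul_nonpos_of_nonpos_of_nonneg this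
          (sub_nonneg.2 (F2 k (by omega) (by omega) (by omega)))
      · have : d (k + 1) = 0 := by
          have := a2 h
          simp only [d]
          linarith
        rw [this, zero_mul]
    by_cases hlh : max (y : ℕ) p < min (x : ℕ) q
    · refine core_sum M (max (y : ℕ) p) (min (x : ℕ) q) d w (-c) hlh.le (by omega) ?_ ?_ ?_
      · intro k h1 h2
        have := (hc (k + 1)).2.2 (by omega) (by omega) (by omega) (by omega)
        simp only [d]
        linarith
      · apply mul_nonpos_of_nonpos_of_nonneg (by linarith)
        apply sub_nonneg.2
        have hhi : max (y : ℕ) p < m := by omega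
        by_cases hxp : (x : ℕ) ≤ q
        · rw [min_eq_left hxp]
          exact hwtop ⟨max (y : ℕ) p, hhi⟩
        · rw [min_eq_right (by omega)]
          apply hw q ⟨max (y : ℕ) p, hhi⟩
          apply i3
          · rw [Fin.le_def]; omega
          · rw [Fin.le_def]; show (p : ℕ) ≤ max (y : ℕ) p; omega
          · rw [Fin.le_def]; show max (y : ℕ) p ≤ q; omega
          · rw [Ne, Fin.ext_iff]; show ¬ max (y : ℕ) p = q; omega
      · intro k hk hk2
        exact hout k hk (by omega)
    · refine core_sum M 0 0 d w 0 le_rfl (by omega) (by intro k _ h; omega) (by simp) ?_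
      intro k hk _
      exact hout k hk (by omega)

theorem backward_un [NeZero m] {D : Set (Pref m)} (φ : Profile D n → Lottery m)
    {β : Finset (Fin n) → Lottery m} (hβ : IsPFBRWith φ β) : Unanimous φ := by
  classical
  obtain ⟨⟨hN, h0⟩, -, hφ⟩ := hβ
  intro P a ha
  have ht : ∀ k : ℕ, tailProb β P k = if k ≤ a then 1 else 0 := by
    intro k
    unfold tailProb
    have hm := NeZero.ne m
    by_cases hk : k < m
    · rw [dif_pos hk]
      by_cases hka : k ≤ a
      · have : voterSet P ⟨k, hk⟩ = univ := by
          ext j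
          simp only [voterSet, ha, Finset.mem_filter, Finset.mem_univ, true_and, iff_true]
          exact hka
        rw [this, hN, if_pos hka]
        simp only [Lottery.prob, degLottery]
        rw [Finset.sum_ite_eq', if_pos (mem_up.2 (le_last _))]
      · have : voterSet P ⟨k, hk⟩ = ∅ := by
          ext j
          simp only [voterSet, ha, Finset.mem_filter, Finset.mem_univ, true_and,
            Finset.notMem_empty, iff_false]
          exact hka
        rw [this, h0, if_neg hka]
        simp only [Lottery.prob, degLottery]
        rw [Finset.sum_ite_eq', if_neg]
        rw [mem_up, Fin.le_def, Fin.val_zero]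
        show ¬ k ≤ 0
        omega
    · rw [dif_neg hk, if_neg]
      have := a.2
      omega
  apply Subtype.ext
  funext z
  rw [hφ P z, ht, ht]
  simp only [degLottery, Fin.ext_iff]
  by_cases h1 : (z : ℕ) ≤ a <;> by_cases h2 : (z : ℕ) + 1 ≤ a <;> by_cases h3 : (z : ℕ) = a <;>
    simp only [h1, h2, h3, if_true, if_false] <;> first | omega | norm_num

theorem rd_mid {p q : Fin m} (hpq : p < q) {β : Finset (Fin n) → Lottery m}
    (h : ConstrainedRD p q β) :
    ∃ ε : Fin n → ℝ, (∀ i, 0 ≤ ε i) ∧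
      ∀ S k, p < k → k ≤ q → (β S).prob (upSet k) = ∑ i ∈ S, ε i := by
  classical
  obtain ⟨ε, h0, h1, h2⟩ := h
  refine ⟨ε, h0, fun S k hk1 hk2 => ?_⟩
  obtain ⟨e1, e2⟩ := h2 S
  apply le_antisymm
  · have hs : (β S).prob (upSet k) + (β S).prob (downSet p) ≤ 1 := by
      rw [Lottery.prob, Lottery.prob, ← Finset.sum_union]
      · refine le_trans ?_ (β S).2.2.le
        exact Finset.sum_le_sum_of_subset_of_nonneg (Finset.subset_univ _)
          (fun z _ _ => (β S).2.1 z)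
      · rw [Finset.disjoint_left]
        intro a ha hb
        rw [mem_up] at ha
        rw [mem_down] at hb
        exact absurd (ha.trans hb) (not_le.2 hk1)
    have h3 := Finset.sum_add_sum_compl S ε
    rw [e2] at hs
    linarith
  · rw [← e1]
    apply Finset.sum_le_sum_of_subset_of_nonneg
    · intro a ha
      rw [mem_up] at *
      exact hk2.trans ha
    · exact fun z _ _ => (β S).2.1 z

end Aux


/-- On a regular `(p,q)`-hybrid* domain, a RSCF is unanimous and
strategy-proof iff it is a PFBR, and moreover a `(p,q)`-PFBR when `q - p > 1`. -/
theorem rule_characterization (m n : ℕ) [NeZero m] (hm : 3 ≤ m) (hn : 2 ≤ n)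
    (D : Set (Pref m)) (p q : Fin m) (hpq : p < q)
    (hreg : RegularDomain D) (hstar : IsHybridStar D p q)
    (φ : Profile D n → Lottery m) :
    (Unanimous φ ∧ StrategyProof φ) ↔
      (IsPFBR φ ∧ ((p : ℕ) + 1 < (q : ℕ) →
        ∃ β, IsPFBRWith φ β ∧ ConstrainedRD p q β)) := by
  constructor
  · rintro ⟨hu, hsp⟩
    obtain ⟨β, h1, h2⟩ := forward hm D p q hpq hreg hstar φ hu hsp
    exact ⟨⟨β, h1⟩, fun h => ⟨β, h1, h2 h⟩⟩
  · rintro ⟨⟨β, hβ⟩, h⟩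
    refine ⟨backward_un φ hβ, ?_⟩
    by_cases hgap : (p : ℕ) + 1 < q
    · obtain ⟨β', hβ', hrd⟩ := h hgap
      exact backward_sp hpq hstar.1 φ hβ' (Or.inr (rd_mid hpq hrd))
    · refine backward_sp hpq hstar.1 φ hβ (Or.inl ?_)
      have : (p : ℕ) < q := hpq
      omega
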